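/- arXiv:math/0412163 — 5 statements merged into one kernel-verified Lean document; each statement's English description precedes it below -/
import Mathlib

section
/- Let 0 < ε < ρ < 1 and set a := ρ/(2−ρ) ∈ ℂ, regarded as a bounded operator on the one-dimensional Hilbert space ℂ. Then a belongs to the class C_ρ but a does not belong to the class C_{ρ−ε}. In particular, for 0 < ρ < ρ′ ≤ 1 the scalar classes satisfy C_ρ ⊊ C_{ρ′}. -/
open ContinuousLinearMap

noncomputable section

/-- A unitary `ρ`-dilation of a single bounded operator `A` on a complex Hilbert space `X`:
a complex Hilbert space `Y`, a linear isometry `ι : X → Y`, and a unitary operator `U` on `Y`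
such that `Aⁿ = ρ · ι* ∘ Uⁿ ∘ ι` for every integer `n ≥ 1`. -/
structure UnitaryRhoDilation1 (ρ : ℝ) (X : Type*) [NormedAddCommGroup X]
    [InnerProductSpace ℂ X] [CompleteSpace X] (A : X →L[ℂ] X) where
  Y : Type
  [instN : NormedAddCommGroup Y]
  [instI : InnerProductSpace ℂ Y]
  [instC : CompleteSpace Y]
  ι : X →L[ℂ] Y
  isom : Isometry ι
  U : Y →L[ℂ] Y
  unit : U ∘L adjoint U = 1 ∧ adjoint U ∘L U = 1
  dil : ∀ n : ℕ, 1 ≤ n → A ^ n = (ρ : ℂ) • (adjoint ι ∘L ((U ^ n) ∘L ι))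

/-- The class `C_ρ` of Sz.-Nagy and Foiaş: bounded operators admitting a unitary
`ρ`-dilation. -/
def MemC1 (ρ : ℝ) {X : Type*} [NormedAddCommGroup X] [InnerProductSpace ℂ X]
    [CompleteSpace X] (A : X →L[ℂ] X) : Prop :=
  Nonempty (UnitaryRhoDilation1 ρ X A)

/-!
If `(ι, U)` is a unitary `ρ`-dilation of `A`, the vector `f = U (ι x) - ι (A x)` is orthogonal to
`Uⁿ f` for `n ≥ 2`, so its spectral density on the circle is `c₀ + 2 Re (c₁ z)`. Nonnegativity
forces `2 |c₁| ≤ c₀`, which for a scalar operator `a` and `ρ ≤ 1` reads `|a| ≤ ρ / (2 - ρ)`.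

Conversely a scalar contraction `s` has a unitary `1`-dilation `(ι, U)`, given by a geometric
sequence under the bilateral shift, and the multiple of `(1 + U) ι` that is isometric makes `U` a
`2 s / (1 + s)`-dilation of `s`; this parameter is `ρ` when `s = ρ / (2 - ρ)`. The classes increase
with `ρ`, since adding to `ι` a multiple of a dilation of `0` only rescales the relation.
-/

section
variable {𝕜 E : Type*} [RCLike 𝕜] [NormedAddCommGroup E] [InnerProductSpace 𝕜 E]
  {T : E →L[𝕜] E} {f : E}

theorem norm_sq_sum_pow_apply_le (hT : ‖T‖ ≤ 1) (h : ∀ n ≥ 2, inner 𝕜 f ((T ^ n) f) = 0) (N : ℕ) :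
    ‖∑ k ∈ Finset.range (N + 1), (T ^ k) f‖ ^ 2 ≤
      (N + 1) * ‖f‖ ^ 2 + 2 * N * RCLike.re (inner 𝕜 f (T f)) := by
  induction N with
  | zero => simp
  | succ N ih =>
    set g := ∑ k ∈ Finset.range (N + 1), (T ^ k) f with hg
    have sum_succ : ∑ k ∈ Finset.range (N + 1 + 1), (T ^ k) f = f + T g := by
      rw [Finset.sum_range_succ', hg, map_sum, add_comm]
      simp only [pow_succ', pow_zero, mul_apply_eq_comp, one_apply_eq_self]
    have inner_g : inner 𝕜 f (T g) = inner 𝕜 f (T f) := by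
      rw [hg, map_sum, inner_sum, Finset.sum_eq_single_of_mem 0 (by simp)]
      · simp
      · intro k _ hk
        rw [← mul_apply_eq_comp, ← pow_succ']
        exact h (k + 1) (by lia)
    have norm_T_g : ‖T g‖ ^ 2 ≤ ‖g‖ ^ 2 := by
      gcongr
      exact (T.le_of_opNorm_le hT g).trans_eq (one_mul _)
    rw [sum_succ, norm_add_sq (𝕜 := 𝕜), inner_g]
    push_cast
    linarith

theorem two_mul_norm_inner_apply_le (hT : ‖T‖ ≤ 1) (h : ∀ n ≥ 2, inner 𝕜 f ((T ^ n) f) = 0) :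
    2 * ‖inner 𝕜 f (T f)‖ ≤ ‖f‖ ^ 2 := by
  obtain ⟨c, hc, hcT⟩ := RCLike.exists_norm_eq_mul_self (inner 𝕜 f (T f))
  have norm_rotated : ‖-c • T‖ ≤ 1 := by rwa [norm_smul, norm_neg, hc, one_mul]
  have inner_rotated : inner 𝕜 f ((-c • T) f) = ((-‖inner 𝕜 f (T f)‖ : ℝ) : 𝕜) := by
    rw [smul_apply, inner_smul_right, neg_mul, ← hcT, RCLike.ofReal_neg]
  have pow_rotated : ∀ n ≥ 2, inner 𝕜 f (((-c • T) ^ n) f) = 0 := fun n hn => by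
    rw [smul_pow, smul_apply, inner_smul_right, h n hn, mul_zero]
  by_contra! hlt
  obtain ⟨N, hN⟩ := exists_nat_gt (‖f‖ ^ 2 / (2 * ‖inner 𝕜 f (T f)‖ - ‖f‖ ^ 2))
  rw [div_lt_iff₀ (sub_pos.mpr hlt)] at hN
  have := (sq_nonneg _).trans (norm_sq_sum_pow_apply_le norm_rotated pow_rotated N)
  rw [inner_rotated, RCLike.ofReal_re] at this
  linarith

end

section
variable {X Y : Type*} [NormedAddCommGroup X] [InnerProductSpace ℂ X]
  [NormedAddCommGroup Y] [InnerProductSpace ℂ Y]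
  {ρ : ℝ} {A : X →L[ℂ] X} {ι : X →ₗᵢ[ℂ] Y} {U : Y →L[ℂ] Y}

/-- The defect vector `U (ι x) - ι (A x)`, which measures how far `ι x` is from being carried by
`U` as `x` is by `A`. -/
def IsUnitaryRhoDilation.defect (A : X →L[ℂ] X) (ι : X →ₗᵢ[ℂ] Y) (U : Y →L[ℂ] Y) (x : X) : Y :=
  U (ι x) - ι (A x)

variable [CompleteSpace Y]

/-- The pair `(ι, U)` is a unitary `ρ`-dilation of `A`, with `Aⁿ = ρ · ι* Uⁿ ι` written through
matrix coefficients. -/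
structure IsUnitaryRhoDilation (ρ : ℝ) (A : X →L[ℂ] X) (ι : X →ₗᵢ[ℂ] Y) (U : Y →L[ℂ] Y) :
    Prop where
  mem_unitary : U ∈ unitary (Y →L[ℂ] Y)
  inner_pow : ∀ n ≥ 1, ∀ x y, ρ * inner ℂ (ι x) ((U ^ n) (ι y)) = inner ℂ x ((A ^ n) y)

namespace IsUnitaryRhoDilation

theorem inner_pow_eq_inv_mul (h : IsUnitaryRhoDilation ρ A ι U) (hρ : ρ ≠ 0) {n : ℕ} (hn : n ≥ 1)
    (x y : X) : inner ℂ (ι x) ((U ^ n) (ι y)) = (ρ : ℂ)⁻¹ * inner ℂ x ((A ^ n) y) := by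
  rw [← h.inner_pow n hn, inv_mul_cancel_left₀ (Complex.ofReal_ne_zero.mpr hρ)]

theorem inner_pow_defect (h : IsUnitaryRhoDilation ρ A ι U) (hρ : ρ ≠ 0) {n : ℕ} (hn : n ≥ 1)
    (x y : X) : inner ℂ (ι y) ((U ^ n) (defect A ι U x)) = 0 := by
  rw [defect, map_sub, ← mul_apply_eq_comp, ← pow_succ, inner_sub_right,
    h.inner_pow_eq_inv_mul hρ (by lia), h.inner_pow_eq_inv_mul hρ hn, pow_succ, mul_apply_eq_comp,
    sub_self]

theorem inner_defect (h : IsUnitaryRhoDilation ρ A ι U) (hρ : ρ ≠ 0) (x y : X) :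
    inner ℂ (ι y) (defect A ι U x) = ((1 / ρ - 1 : ℝ) : ℂ) * inner ℂ y (A x) := by
  have h_one := h.inner_pow_eq_inv_mul hρ le_rfl y x
  rw [pow_one, pow_one] at h_one
  rw [defect, inner_sub_right, h_one, ι.inner_map_map]
  push_cast
  ring

theorem inner_defect_pow_succ_defect (h : IsUnitaryRhoDilation ρ A ι U) (hρ : ρ ≠ 0) (n : ℕ)
    (x : X) : inner ℂ (defect A ι U x) ((U ^ (n + 1)) (defect A ι U x)) =
      inner ℂ (ι x) ((U ^ n) (defect A ι U x)) := by
  conv_lhs => enter [2]; rw [defect]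
  rw [inner_sub_left, h.inner_pow_defect hρ (by lia), sub_zero, pow_succ', mul_apply_eq_comp,
    inner_map_map_of_mem_unitary h.mem_unitary]

theorem norm_sq_defect (h : IsUnitaryRhoDilation ρ A ι U) (hρ : ρ ≠ 0) (x : X) :
    ‖defect A ι U x‖ ^ 2 = ‖x‖ ^ 2 - (2 / ρ - 1) * ‖A x‖ ^ 2 := by
  have re_inner : RCLike.re (inner ℂ (ι (A x)) (U (ι x))) = ρ⁻¹ * ‖A x‖ ^ 2 := by
    have h_one := h.inner_pow_eq_inv_mul hρ le_rfl (A x) x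
    rw [pow_one, pow_one] at h_one
    rw [h_one, ← Complex.ofReal_inv, RCLike.re_eq_complex_re, Complex.re_ofReal_mul,
      ← RCLike.re_eq_complex_re, inner_self_eq_norm_sq]
  rw [defect, norm_sub_rev, norm_sub_sq (𝕜 := ℂ), re_inner, ι.norm_map,
    norm_map_of_mem_unitary h.mem_unitary, ι.norm_map]
  ring

theorem norm_inner_add_norm_sq_le (h : IsUnitaryRhoDilation ρ A ι U) (hρ : ρ ≠ 0) (x : X) :
    2 * |1 / ρ - 1| * ‖inner ℂ x (A x)‖ + (2 / ρ - 1) * ‖A x‖ ^ 2 ≤ ‖x‖ ^ 2 := by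
  have norm_U : ‖U‖ ≤ 1 := U.opNorm_le_bound zero_le_one fun y => by
    rw [norm_map_of_mem_unitary h.mem_unitary, one_mul]
  have orthogonal : ∀ n ≥ 2, inner ℂ (defect A ι U x) ((U ^ n) (defect A ι U x)) = 0 := by
    intro n hn
    obtain ⟨m, rfl⟩ := Nat.exists_eq_add_of_le' (one_le_two.trans hn)
    rw [h.inner_defect_pow_succ_defect hρ, h.inner_pow_defect hρ (by lia)]
  have inner_U : inner ℂ (defect A ι U x) (U (defect A ι U x)) =
      ((1 / ρ - 1 : ℝ) : ℂ) * inner ℂ x (A x) := by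
    simpa only [zero_add, pow_one, pow_zero, one_apply_eq_self, h.inner_defect hρ] using
      h.inner_defect_pow_succ_defect hρ 0 x
  have := two_mul_norm_inner_apply_le norm_U orthogonal
  rw [inner_U, norm_mul, Complex.norm_real, Real.norm_eq_abs, h.norm_sq_defect hρ] at this
  linarith

theorem inner_pow_of_smul_one {s : ℝ}
    (h : IsUnitaryRhoDilation 1 ((s : ℂ) • (1 : X →L[ℂ] X)) ι U) (n : ℕ)
    (x y : X) : inner ℂ (ι x) ((U ^ n) (ι y)) = s ^ n * inner ℂ x y := by
  rcases Nat.eq_zero_or_pos n with rfl | hn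
  · simp
  · simpa [smul_pow, inner_smul_right] using h.inner_pow n hn x y

theorem inner_add_map {s : ℝ}
    (h : IsUnitaryRhoDilation 1 ((s : ℂ) • (1 : X →L[ℂ] X)) ι U) (x y : X) :
    inner ℂ (ι x + U (ι x)) (ι y + U (ι y)) = (2 + 2 * s) * inner ℂ x y := by
  have inner_one (x y : X) : inner ℂ (ι x) (U (ι y)) = s * inner ℂ x y := by
    simpa only [pow_one] using h.inner_pow_of_smul_one 1 x y
  rw [inner_add_left, inner_add_right, inner_add_right,
    inner_map_map_of_mem_unitary h.mem_unitary, ι.inner_map_map, inner_one,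
    ← inner_conj_symm (U (ι x)), inner_one, map_mul, Complex.conj_ofReal, inner_conj_symm]
  ring

theorem inner_add_map_pow_succ {s : ℝ}
    (h : IsUnitaryRhoDilation 1 ((s : ℂ) • (1 : X →L[ℂ] X)) ι U) (n : ℕ)
    (x y : X) : inner ℂ (ι x + U (ι x)) ((U ^ (n + 1)) (ι y + U (ι y))) =
      s ^ n * (1 + s) ^ 2 * inner ℂ x y := by
  have inner_map_pow_succ (n : ℕ) :
      inner ℂ (U (ι x)) ((U ^ (n + 1)) (ι y)) = s ^ n * inner ℂ x y := by
    rw [pow_succ', mul_apply_eq_comp, inner_map_map_of_mem_unitary h.mem_unitary,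
      h.inner_pow_of_smul_one]
  rw [map_add, ← mul_apply_eq_comp, ← pow_succ, inner_add_left, inner_add_right, inner_add_right,
    inner_map_pow_succ, inner_map_pow_succ, h.inner_pow_of_smul_one, h.inner_pow_of_smul_one]
  ring

end IsUnitaryRhoDilation

end

section
variable {X : Type*} [NormedAddCommGroup X] [InnerProductSpace ℂ X] [CompleteSpace X]
  {ρ : ℝ} {A : X →L[ℂ] X}

theorem memC1_iff_exists_isUnitaryRhoDilation : MemC1 ρ A ↔
    ∃ (Y : Type) (_ : NormedAddCommGroup Y) (_ : InnerProductSpace ℂ Y) (_ : CompleteSpace Y)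
      (ι : X →ₗᵢ[ℂ] Y) (U : Y →L[ℂ] Y), IsUnitaryRhoDilation ρ A ι U := by
  constructor
  · rintro ⟨Y, ι, isom, U, unit, dil⟩
    refine ⟨Y, inferInstance, inferInstance, inferInstance,
      ⟨ι, (AddMonoidHomClass.isometry_iff_norm ι).mp isom⟩, U, ⟨unit.2, unit.1⟩,
      fun n hn x y => ?_⟩
    rw [dil n hn, smul_apply, inner_smul_right, comp_apply, comp_apply, adjoint_inner_right]
    rfl
  · rintro ⟨Y, _, _, _, ι, U, h⟩
    refine ⟨⟨Y, ι.toContinuousLinearMap, ι.isometry, U,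
      ⟨h.mem_unitary.2, h.mem_unitary.1⟩, fun n hn => ?_⟩⟩
    refine ContinuousLinearMap.ext fun y => ext_inner_left ℂ fun x => ?_
    rw [smul_apply, inner_smul_right, comp_apply, comp_apply, adjoint_inner_right]
    exact (h.inner_pow n hn x y).symm

theorem memC1_of_inner_pow {Y : Type} [NormedAddCommGroup Y] [InnerProductSpace ℂ Y]
    [CompleteSpace Y] {J : X →ₗ[ℂ] Y} {U : Y →L[ℂ] Y} {r : ℝ} (hr : 0 < r)
    (hU : U ∈ unitary (Y →L[ℂ] Y)) (inner_J : ∀ x y, inner ℂ (J x) (J y) = r * inner ℂ x y)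
    (inner_pow : ∀ n ≥ 1, ∀ x y,
      ρ * inner ℂ (J x) ((U ^ n) (J y)) = r * inner ℂ x ((A ^ n) y)) : MemC1 ρ A := by
  have h_scale : (√r⁻¹ : ℂ) * √r⁻¹ * r = 1 := by
    rw [← Complex.ofReal_mul, Real.mul_self_sqrt (inv_nonneg.mpr hr.le), ← Complex.ofReal_mul,
      inv_mul_cancel₀ hr.ne', Complex.ofReal_one]
  let ι : X →ₗᵢ[ℂ] Y := ((√r⁻¹ : ℂ) • J).isometryOfInner fun x y => by
    rw [LinearMap.smul_apply, LinearMap.smul_apply, inner_smul_left, inner_smul_right, inner_J,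
      Complex.conj_ofReal]
    linear_combination inner ℂ x y * h_scale
  refine memC1_iff_exists_isUnitaryRhoDilation.mpr
    ⟨Y, _, _, inferInstance, ι, U, hU, fun n hn x y => ?_⟩
  change ρ * inner ℂ ((√r⁻¹ : ℂ) • J x) ((U ^ n) ((√r⁻¹ : ℂ) • J y)) = _
  rw [map_smul, inner_smul_left, inner_smul_right, Complex.conj_ofReal]
  linear_combination (√r⁻¹ : ℂ) * √r⁻¹ * inner_pow n hn x y + inner ℂ x ((A ^ n) y) * h_scale

theorem MemC1.norm_le_div_two_sub [Nontrivial X] (hρ₀ : 0 < ρ) (hρ₁ : ρ ≤ 1) {a : ℂ}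
    (h : MemC1 ρ (a • (1 : X →L[ℂ] X))) : ‖a‖ ≤ ρ / (2 - ρ) := by
  obtain ⟨Y, _, _, _, ι, U, hU⟩ := memC1_iff_exists_isUnitaryRhoDilation.mp h
  obtain ⟨x, hx⟩ := exists_norm_eq X zero_le_one
  have inner_x : inner ℂ x ((a • (1 : X →L[ℂ] X)) x) = a := by
    simp [inner_self_eq_norm_sq_to_K, hx]
  have norm_ax : ‖(a • (1 : X →L[ℂ] X)) x‖ = ‖a‖ := by simp [norm_smul, hx]
  have h_le := hU.norm_inner_add_norm_sq_le hρ₀.ne' x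
  rw [inner_x, norm_ax, hx, abs_of_nonneg (sub_nonneg.mpr (one_le_one_div hρ₀ hρ₁))] at h_le
  have factored : (‖a‖ * (2 - ρ) - ρ) * (‖a‖ + 1) ≤ 0 := by
    have := mul_le_mul_of_nonneg_left h_le hρ₀.le
    field_simp at this
    linarith
  rw [le_div_iff₀ (by linarith)]
  nlinarith [norm_nonneg a]

end

section
variable {α β E : Type*} [NormedAddCommGroup E]

theorem memℓp_comp_injective {p : ENNReal} (hp : 0 < p.toReal) {e : α → β}
    (he : Function.Injective e) {f : β → E} (hf : Memℓp f p) : Memℓp (f ∘ e) p :=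
  memℓp_gen ((hf.summable hp).comp_injective he)

theorem memℓp_smul_const {𝕜 : Type*} [NormedField 𝕜] [NormedSpace 𝕜 E] {p : ENNReal}
    (hp : 0 < p.toReal) {c : α → 𝕜} (hc : Memℓp c p) (x : E) : Memℓp (fun i => c i • x) p := by
  refine memℓp_gen (((hc.summable hp).mul_right (‖x‖ ^ p.toReal)).congr fun i => ?_)
  rw [norm_smul, Real.mul_rpow (norm_nonneg _) (norm_nonneg _)]

end

section
variable (𝕜 E : Type*) {α β : Type*} [RCLike 𝕜] [NormedAddCommGroup E] [InnerProductSpace 𝕜 E]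

/-- Reindexing of the Hilbert sum `ℓ²(β, E)` along a bijection `α ≃ β`. -/
def ellTwoReindex (e : α ≃ β) : lp (fun _ : β => E) 2 ≃ₗᵢ[𝕜] lp (fun _ : α => E) 2 where
  toFun f := ⟨f ∘ e, memℓp_comp_injective (by norm_num) e.injective (lp.memℓp f)⟩
  invFun f := ⟨f ∘ e.symm, memℓp_comp_injective (by norm_num) e.symm.injective (lp.memℓp f)⟩
  map_add' _ _ := rfl
  map_smul' _ _ := rfl
  left_inv f := lp.ext (funext fun i => congrArg f (e.apply_symm_apply i))
  right_inv f := lp.ext (funext fun i => congrArg f (e.symm_apply_apply i))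
  norm_map' f := by
    rw [lp.norm_eq_tsum_rpow (by norm_num), lp.norm_eq_tsum_rpow (by norm_num)]
    congr 1
    exact e.tsum_eq fun i => ‖f i‖ ^ (2 : ENNReal).toReal

/-- The bilateral shift `(S f) k = f (k + 1)` on `ℓ²(ℤ, E)`. -/
def bilateralShift : lp (fun _ : ℤ => E) 2 →L[𝕜] lp (fun _ : ℤ => E) 2 :=
  (ellTwoReindex 𝕜 E (Equiv.addRight (1 : ℤ))).toContinuousLinearEquiv

theorem bilateralShift_mem_unitary [CompleteSpace E] :
    bilateralShift 𝕜 E ∈ unitary (lp (fun _ : ℤ => E) 2 →L[𝕜] lp (fun _ : ℤ => E) 2) :=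
  (Unitary.linearIsometryEquiv.symm (ellTwoReindex 𝕜 E (Equiv.addRight (1 : ℤ)))).2

variable {𝕜 E}

theorem bilateralShift_pow_apply (n : ℕ) (f : lp (fun _ : ℤ => E) 2) (k : ℤ) :
    (bilateralShift 𝕜 E ^ n) f k = f (k + n) := by
  induction n generalizing k with
  | zero => simp
  | succ n ih =>
    calc (bilateralShift 𝕜 E ^ (n + 1)) f k = (bilateralShift 𝕜 E ^ n) f (k + 1) := by
          rw [pow_succ', mul_apply_eq_comp]; rfl
      _ = f (k + (n + 1 : ℕ)) := by rw [ih, Nat.cast_succ, add_assoc, add_comm 1]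

/-- The embedding `x ↦ c ⊗ x` of `E` into `ℓ²(α, E) = ℓ²(α) ⊗ E`. -/
def ellTwoTensor (c : lp (fun _ : α => 𝕜) 2) : E →ₗ[𝕜] lp (fun _ : α => E) 2 where
  toFun x := ⟨fun i => c i • x, memℓp_smul_const (by norm_num) (lp.memℓp c) x⟩
  map_add' x y := lp.ext (funext fun i => smul_add (c i) x y)
  map_smul' r x := lp.ext (funext fun i => smul_comm (c i) r x)

theorem inner_ellTwoTensor (c d : lp (fun _ : α => 𝕜) 2) (x y : E) :
    inner 𝕜 (ellTwoTensor c x) (ellTwoTensor d y) = inner 𝕜 c d * inner 𝕜 x y := by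
  refine (lp.hasSum_inner (ellTwoTensor c x) (ellTwoTensor d y)).unique
    (((lp.hasSum_inner c d).mul_right (inner 𝕜 x y)).congr_fun fun i => ?_)
  change inner 𝕜 (c i • x) (d i • y) = inner 𝕜 (c i) (d i) * inner 𝕜 x y
  rw [inner_smul_left, inner_smul_right, RCLike.inner_apply]
  ring

theorem bilateralShift_pow_ellTwoTensor (n : ℕ) (c : lp (fun _ : ℤ => 𝕜) 2) (x : E) :
    (bilateralShift 𝕜 E ^ n) (ellTwoTensor c x) =
      ellTwoTensor ((bilateralShift 𝕜 𝕜 ^ n) c) x := by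
  refine lp.ext (funext fun k => ?_)
  rw [bilateralShift_pow_apply]
  change c (k + n) • x = (bilateralShift 𝕜 𝕜 ^ n) c k • x
  rw [bilateralShift_pow_apply]

end

section

/-- The sequence on `ℤ` that is `√(1 - |a|²) aᵏ` for `k ≥ 0` and `0` for `k < 0`; it has norm one
in `ℓ²(ℤ)` for `|a| < 1`. -/
def geometricSeq (a : ℂ) : ℤ → ℂ
  | Int.ofNat k => √(1 - ‖a‖ ^ 2) * a ^ k
  | Int.negSucc _ => 0

variable {a : ℂ}

theorem hasSum_inner_geometricSeq (ha : ‖a‖ < 1) (n : ℕ) :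
    HasSum (fun k : ℤ => inner ℂ (geometricSeq a k) (geometricSeq a (k + n))) (a ^ n) := by
  have one_sub_pos : 0 < 1 - ‖a‖ ^ 2 := by nlinarith [norm_nonneg a]
  have term (k : ℕ) : inner ℂ (geometricSeq a k) (geometricSeq a (k + n)) =
      a ^ n * ((1 - ‖a‖ ^ 2) * (‖a‖ ^ 2) ^ k : ℝ) := by
    change (√(1 - ‖a‖ ^ 2) * a ^ (k + n)) * (starRingEnd ℂ) (√(1 - ‖a‖ ^ 2) * a ^ k) = _
    calc _ = a ^ n * (((√(1 - ‖a‖ ^ 2) : ℝ) : ℂ) ^ 2 * (a * (starRingEnd ℂ) a) ^ k) := by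
          rw [map_mul, map_pow, Complex.conj_ofReal]; ring
      _ = _ := by
          rw [← Complex.ofReal_pow, Real.sq_sqrt one_sub_pos.le, Complex.mul_conj']
          push_cast; rfl
  have geometric : HasSum (fun k : ℕ => (1 - ‖a‖ ^ 2) * (‖a‖ ^ 2) ^ k) 1 := by
    have := (hasSum_geometric_of_lt_one (sq_nonneg ‖a‖) (by linarith)).mul_left (1 - ‖a‖ ^ 2)
    rwa [mul_inv_cancel₀ one_sub_pos.ne'] at this
  rw [← Function.Injective.hasSum_iff Nat.cast_injective]
  · simpa only [Function.comp_def, term, Complex.ofReal_one, mul_one] using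
      (Complex.hasSum_ofReal.mpr geometric).mul_left (a ^ n)
  · rintro (k | k) hk
    · exact absurd ⟨k, rfl⟩ hk
    · exact inner_zero_left _

theorem memℓp_geometricSeq (ha : ‖a‖ < 1) : Memℓp (geometricSeq a) 2 := by
  refine memℓp_gen ((hasSum_inner_geometricSeq ha 0).summable.norm.congr fun k => ?_)
  rw [Nat.cast_zero, add_zero, inner_self_eq_norm_sq_to_K, norm_pow, RCLike.norm_ofReal,
    abs_norm, ENNReal.toReal_ofNat, Real.rpow_two]

/-- `geometricSeq a` as a vector of `ℓ²(ℤ)`. -/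
def geometricVector (ha : ‖a‖ < 1) : lp (fun _ : ℤ => ℂ) 2 :=
  ⟨geometricSeq a, memℓp_geometricSeq ha⟩

theorem inner_bilateralShift_pow_geometricVector (ha : ‖a‖ < 1) (n : ℕ) :
    inner ℂ (geometricVector ha) ((bilateralShift ℂ ℂ ^ n) (geometricVector ha)) = a ^ n := by
  refine (lp.hasSum_inner _ _).unique ?_
  simp only [bilateralShift_pow_apply]
  exact hasSum_inner_geometricSeq ha n

end

section
variable {𝕜 Y Z : Type*} [RCLike 𝕜] [NormedAddCommGroup Y] [InnerProductSpace 𝕜 Y]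
  [CompleteSpace Y] [NormedAddCommGroup Z] [InnerProductSpace 𝕜 Z] [CompleteSpace Z]

/-- The direct sum of two unitary operators, acting on the Hilbert sum of their spaces. -/
def unitaryProd (U : unitary (Y →L[𝕜] Y)) (V : unitary (Z →L[𝕜] Z)) :
    unitary (WithLp 2 (Y × Z) →L[𝕜] WithLp 2 (Y × Z)) :=
  Unitary.linearIsometryEquiv.symm (LinearIsometryEquiv.withLpProdCongr 2
    (Unitary.linearIsometryEquiv U) (Unitary.linearIsometryEquiv V))

theorem unitaryProd_pow_apply (U : unitary (Y →L[𝕜] Y)) (V : unitary (Z →L[𝕜] Z)) (n : ℕ)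
    (w : WithLp 2 (Y × Z)) :
    ((unitaryProd U V : WithLp 2 (Y × Z) →L[𝕜] WithLp 2 (Y × Z)) ^ n) w =
      .toLp 2 (((U : Y →L[𝕜] Y) ^ n) w.fst, ((V : Z →L[𝕜] Z) ^ n) w.snd) := by
  induction n with
  | zero => rfl
  | succ n ih => rw [pow_succ', mul_apply_eq_comp, ih, pow_succ', pow_succ']; rfl

theorem inner_unitaryProd_pow (U : unitary (Y →L[𝕜] Y)) (V : unitary (Z →L[𝕜] Z)) (n : ℕ)
    (v w : WithLp 2 (Y × Z)) :
    inner 𝕜 v (((unitaryProd U V : WithLp 2 (Y × Z) →L[𝕜] WithLp 2 (Y × Z)) ^ n) w) =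
      inner 𝕜 v.fst (((U : Y →L[𝕜] Y) ^ n) w.fst) +
        inner 𝕜 v.snd (((V : Z →L[𝕜] Z) ^ n) w.snd) := by
  rw [unitaryProd_pow_apply, WithLp.prod_inner_apply]
  rfl

end

section
variable {X : Type} [NormedAddCommGroup X] [InnerProductSpace ℂ X] [CompleteSpace X]
  {ρ ρ' : ℝ} {A : X →L[ℂ] X}

theorem memC1_one_of_mem_unitary (hA : A ∈ unitary (X →L[ℂ] X)) : MemC1 1 A :=
  memC1_iff_exists_isUnitaryRhoDilation.mpr
    ⟨X, _, _, inferInstance, .id, A, hA, fun _ _ _ _ => by rw [Complex.ofReal_one, one_mul]; rfl⟩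

theorem memC1_one_smul_one_of_norm_lt_one {a : ℂ} (ha : ‖a‖ < 1) :
    MemC1 1 (a • (1 : X →L[ℂ] X)) := by
  have inner_shift (n : ℕ) (x y : X) : inner ℂ (ellTwoTensor (geometricVector ha) x)
      ((bilateralShift ℂ X ^ n) (ellTwoTensor (geometricVector ha) y)) = a ^ n * inner ℂ x y := by
    rw [bilateralShift_pow_ellTwoTensor, inner_ellTwoTensor,
      inner_bilateralShift_pow_geometricVector]
  refine memC1_of_inner_pow zero_lt_one (bilateralShift_mem_unitary ℂ X)
    (J := ellTwoTensor (geometricVector ha)) (fun x y => by simpa using inner_shift 0 x y)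
    fun n _ x y => ?_
  rw [Complex.ofReal_one, one_mul, one_mul, smul_pow, one_pow, smul_apply, inner_smul_right,
    one_apply_eq_self, inner_shift]

theorem memC1_one_smul_one {a : ℂ} (ha : ‖a‖ ≤ 1) : MemC1 1 (a • (1 : X →L[ℂ] X)) := by
  rcases ha.lt_or_eq with ha | ha
  · exact memC1_one_smul_one_of_norm_lt_one ha
  · have ha_unitary : a ∈ unitary ℂ := by
      rw [Unitary.mem_iff_star_mul_self, Complex.star_def, Complex.conj_mul', ha]
      norm_num
    exact memC1_one_of_mem_unitary (Unitary.smul_mem_of_mem ha_unitary (one_mem _))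

theorem MemC1.mono (hρ : 0 < ρ) (hρρ' : ρ ≤ ρ') (h : MemC1 ρ A) : MemC1 ρ' A := by
  obtain ⟨Y, _, _, _, ι, U, hU⟩ := memC1_iff_exists_isUnitaryRhoDilation.mp h
  obtain ⟨Z, _, _, _, J, S, hS⟩ := memC1_iff_exists_isUnitaryRhoDilation.mp
    (memC1_one_smul_one (X := X) (a := 0) (by simp))
  have inner_S (n : ℕ) (hn : n ≥ 1) (x y : X) : inner ℂ (J x) ((S ^ n) (J y)) = 0 := by
    simpa [zero_pow (show n ≠ 0 by lia)] using hS.inner_pow n hn x y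
  have weight_nonneg : 0 ≤ ρ' / ρ - 1 := sub_nonneg.mpr ((one_le_div hρ).mpr hρρ')
  have mul_weight : (√(ρ' / ρ - 1) : ℂ) * √(ρ' / ρ - 1) = ρ' / ρ - 1 := by
    rw [← Complex.ofReal_mul, Real.mul_self_sqrt weight_nonneg]
    push_cast
    rfl
  let W := unitaryProd ⟨U, hU.mem_unitary⟩ ⟨S, hS.mem_unitary⟩
  let K : X →ₗ[ℂ] WithLp 2 (Y × Z) := (WithLp.linearEquiv 2 ℂ (Y × Z)).symm.toLinearMap ∘ₗ
    ι.toLinearMap.prod ((√(ρ' / ρ - 1) : ℂ) • J.toLinearMap)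
  have inner_K (n : ℕ) (x y : X) : inner ℂ (K x) (((W : _ →L[ℂ] _) ^ n) (K y)) =
      inner ℂ (ι x) ((U ^ n) (ι y)) + (ρ' / ρ - 1) * inner ℂ (J x) ((S ^ n) (J y)) := by
    refine (inner_unitaryProd_pow _ _ n _ _).trans ?_
    change inner ℂ (ι x) ((U ^ n) (ι y)) +
      inner ℂ ((√(ρ' / ρ - 1) : ℂ) • J x) ((S ^ n) ((√(ρ' / ρ - 1) : ℂ) • J y)) = _
    rw [map_smul, inner_smul_left, inner_smul_right, Complex.conj_ofReal, ← mul_assoc, mul_weight]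
  refine memC1_of_inner_pow (r := ρ' / ρ) (by linarith) W.2 (J := K) (fun x y => ?_)
    fun n hn x y => ?_
  · have := inner_K 0 x y
    simp only [pow_zero, one_apply_eq_self, LinearIsometry.inner_map_map] at this
    rw [this]
    push_cast
    ring
  · rw [inner_K, inner_S n hn, mul_zero, add_zero, ← hU.inner_pow n hn, ← mul_assoc,
      ← Complex.ofReal_mul, div_mul_cancel₀ _ hρ.ne']

theorem MemC1.two_mul_div_one_add {s : ℝ} (hs : -1 < s)
    (h : MemC1 1 ((s : ℂ) • (1 : X →L[ℂ] X))) :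
    MemC1 (2 * s / (1 + s)) ((s : ℂ) • (1 : X →L[ℂ] X)) := by
  obtain ⟨Y, _, _, _, ι, U, hU⟩ := memC1_iff_exists_isUnitaryRhoDilation.mp h
  have one_add_ne_zero : (1 + s : ℂ) ≠ 0 := by exact_mod_cast (by linarith : 1 + s ≠ 0)
  refine memC1_of_inner_pow (r := 2 + 2 * s) (by linarith) hU.mem_unitary
    (J := ι.toLinearMap + U.toLinearMap ∘ₗ ι.toLinearMap)
    (fun x y => by exact_mod_cast hU.inner_add_map x y) fun n hn x y => ?_
  obtain ⟨m, rfl⟩ := Nat.exists_eq_add_of_le' hn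
  refine (congrArg _ (hU.inner_add_map_pow_succ m x y)).trans ?_
  rw [smul_pow, one_pow, smul_apply, inner_smul_right, one_apply_eq_self]
  push_cast
  field_simp
  ring

theorem memC1_div_two_sub (hρ₀ : 0 < ρ) (hρ₁ : ρ ≤ 1) :
    MemC1 ρ (((ρ / (2 - ρ) : ℝ) : ℂ) • (1 : X →L[ℂ] X)) := by
  have h_pos : 0 < 2 - ρ := by linarith
  have h_nonneg : 0 ≤ ρ / (2 - ρ) := by positivity
  have h_contraction : ‖((ρ / (2 - ρ) : ℝ) : ℂ)‖ ≤ 1 := by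
    rw [Complex.norm_of_nonneg h_nonneg, div_le_one h_pos]
    linarith
  have h_param : 2 * (ρ / (2 - ρ)) / (1 + ρ / (2 - ρ)) = ρ := by
    field_simp
    ring
  simpa only [h_param] using (memC1_one_smul_one h_contraction).two_mul_div_one_add
    (X := X) (by linarith)

theorem not_memC1_div_two_sub [Nontrivial X] (hρ₀ : 0 < ρ) (hρρ' : ρ < ρ') (hρ' : ρ' ≤ 1) :
    ¬ MemC1 ρ (((ρ' / (2 - ρ') : ℝ) : ℂ) • (1 : X →L[ℂ] X)) := by
  intro h
  have h_le := h.norm_le_div_two_sub hρ₀ (hρρ'.le.trans hρ')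
  have h_lt : ρ / (2 - ρ) < ρ' / (2 - ρ') := by
    rw [div_lt_div_iff₀ (by linarith) (by linarith)]
    linarith
  rw [Complex.norm_real] at h_le
  exact h_le.not_gt (h_lt.trans_le (le_abs_self _))

theorem scalar_memC1_strict_general [Nontrivial X] (ε ρ : ℝ) (hε : 0 < ε) (hερ : ε < ρ)
    (hρ : ρ ≤ 1) :
    (MemC1 ρ (((ρ / (2 - ρ) : ℝ) : ℂ) • (1 : X →L[ℂ] X)) ∧
      ¬ MemC1 (ρ - ε) (((ρ / (2 - ρ) : ℝ) : ℂ) • (1 : X →L[ℂ] X))) ∧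
    (∀ ρ₀ ρ₁ : ℝ, 0 < ρ₀ → ρ₀ < ρ₁ → ρ₀ < 1 →
      (∀ A : X →L[ℂ] X, MemC1 ρ₀ A → MemC1 ρ₁ A) ∧
      ∃ a : ℂ, MemC1 ρ₁ (a • (1 : X →L[ℂ] X)) ∧ ¬ MemC1 ρ₀ (a • (1 : X →L[ℂ] X))) := by
  refine ⟨⟨memC1_div_two_sub (hε.trans hερ) hρ,
    not_memC1_div_two_sub (sub_pos.mpr hερ) (sub_lt_self ρ hε) hρ⟩,
    fun ρ₀ ρ₁ h₀ h₀₁ h₀_lt_one => ⟨fun A hA => hA.mono h₀ h₀₁.le, ?_⟩⟩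
  have h_lt_min : ρ₀ < min ρ₁ 1 := lt_min h₀₁ h₀_lt_one
  exact ⟨_, (memC1_div_two_sub (h₀.trans h_lt_min) (min_le_right _ _)).mono (h₀.trans h_lt_min)
    (min_le_left _ _), not_memC1_div_two_sub h₀ h_lt_min (min_le_right _ _)⟩

end

/-- for `0 < ε < ρ < 1`, the scalar `a = ρ/(2−ρ)`, regarded as an operator on
the one-dimensional Hilbert space `ℂ`, belongs to `C_ρ` but not to `C_{ρ−ε}`.  In particular,
for `0 < ρ₀ < ρ₁ ≤ 1` the scalar classes satisfy `C_{ρ₀} ⊊ C_{ρ₁}`. -/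
theorem scalar_memC1_strict (ε ρ : ℝ) (hε : 0 < ε) (hερ : ε < ρ) (hρ : ρ < 1) :
    (MemC1 ρ (((ρ / (2 - ρ) : ℝ) : ℂ) • (1 : ℂ →L[ℂ] ℂ)) ∧
      ¬ MemC1 (ρ - ε) (((ρ / (2 - ρ) : ℝ) : ℂ) • (1 : ℂ →L[ℂ] ℂ))) ∧
    (∀ ρ₀ ρ₁ : ℝ, 0 < ρ₀ → ρ₀ < ρ₁ → ρ₁ ≤ 1 →
      (∀ a : ℂ, MemC1 ρ₀ (a • (1 : ℂ →L[ℂ] ℂ)) → MemC1 ρ₁ (a • (1 : ℂ →L[ℂ] ℂ))) ∧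
      ∃ a : ℂ, MemC1 ρ₁ (a • (1 : ℂ →L[ℂ] ℂ)) ∧ ¬ MemC1 ρ₀ (a • (1 : ℂ →L[ℂ] ℂ))) := by
  have h := scalar_memC1_strict_general (X := ℂ) ε ρ hε hερ hρ.le
  exact ⟨h.1, fun ρ₀ ρ₁ h₀ h₀₁ h₁ =>
    (h.2 ρ₀ ρ₁ h₀ h₀₁ (h₀₁.trans_le h₁)).imp_left fun h_mono a => h_mono (a • 1)⟩
end
end

section
/- Let N ≥ 1 and let U₁,…,U_N be bounded linear operators on a complex Hilbert space Y such that for every ζ ∈ ℂ^N with |ζ₁| = … = |ζ_N| = 1 the operator ζ₁U₁ + … + ζ_N U_N is unitary. Then Σ_{k=1}^N U_k U_k* = I_Y and Σ_{k=1}^N U_k* U_k = I_Y, and for all j ≠ k one has U_j U_k* = 0 and U_j* U_k = 0. -/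
open ContinuousLinearMap

noncomputable section

/-- A continuous linear operator on a complex Hilbert space is unitary. -/
def IsUnitaryOp {Y : Type*} [NormedAddCommGroup Y] [InnerProductSpace ℂ Y] [CompleteSpace Y]
    (T : Y →L[ℂ] Y) : Prop :=
  T ∘L adjoint T = 1 ∧ adjoint T ∘L T = 1

/-!
Both `a b*` and `b* a` are sesquilinear, so let `B` be sesquilinear with `B (S ζ) (S ζ) = c` for
`S ζ = ∑ ζ_k x_k`. Rotating the single coefficient `ζ_j` and polarizing kills the cross term between
`x_j` and the rest of the sum, that is, `B x_j (S ζ) = conj ζ_j • B x_j x_j`. Flipping the sign of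
another coefficient `ζ_k` does not change the right-hand side, so `B x_j x_k = 0`; summing over `j`
at `ζ = 1` gives `∑ B x_j x_j = c`. Coefficients in `{1, -1, i, -i}` suffice throughout.
-/

theorem sum_update_smul {ι R M : Type*} [Fintype ι] [DecidableEq ι] [Semiring R] [AddCommGroup M]
    [Module R M] (ζ : ι → R) (x : ι → M) (k : ι) (a : R) :
    ∑ i, Function.update ζ k a i • x i = a • x k + (∑ i, ζ i • x i - ζ k • x k) := by
  have rest : ∑ i ∈ Finset.univ.erase k, Function.update ζ k a i • x i =
      ∑ i ∈ Finset.univ.erase k, ζ i • x i :=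
    Finset.sum_congr rfl fun i hi => by rw [Function.update_of_ne (Finset.ne_of_mem_erase hi)]
  rw [← Finset.add_sum_erase _ _ (Finset.mem_univ k), rest, Function.update_self,
    Finset.sum_erase_eq_sub (Finset.mem_univ k)]

section Sesquilinear

variable {E F : Type*} [AddCommGroup E] [Module ℂ E] [AddCommGroup F] [Module ℂ F]
  (B : E →ₗ[ℂ] E →ₗ⋆[ℂ] F)

theorem sesquilinear_polarization (x y : E) :
    (4 : ℂ) • B x y = B (x + y) (x + y) - B (-x + y) (-x + y)
      - Complex.I • B (Complex.I • x + y) (Complex.I • x + y)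
      + Complex.I • B (-Complex.I • x + y) (-Complex.I • x + y) := by
  simp only [map_add, map_neg, map_smul, LinearMap.map_smulₛₗ, LinearMap.add_apply,
    LinearMap.neg_apply, LinearMap.smul_apply, Complex.conj_I, smul_add, smul_neg, neg_smul,
    smul_smul, Complex.I_mul_I]
  module

variable {B} {c : F}

theorem sesquilinear_cross_eq_zero {x y : E}
    (h : ∀ w : ℂ, w ^ 4 = 1 → B (w • x + y) (w • x + y) = c) : B x y = 0 := by
  have h_one : B (x + y) (x + y) = c := by simpa using h 1 (by norm_num)
  have h_neg_one : B (-x + y) (-x + y) = c := by simpa using h (-1) (by norm_num)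
  have h_I := h Complex.I Complex.I_pow_four
  have h_neg_I := h (-Complex.I) (by rw [Even.neg_pow (by decide), Complex.I_pow_four])
  have four_smul_eq_zero : (4 : ℂ) • B x y = 0 := by
    rw [sesquilinear_polarization, h_one, h_neg_one, h_I, h_neg_I]
    abel
  exact (smul_eq_zero.mp four_smul_eq_zero).resolve_left (by norm_num)

variable {ι : Type*} [Fintype ι] {x : ι → E}

theorem sesquilinear_apply_sum_of_const
    (h : ∀ ζ : ι → ℂ, (∀ k, ζ k ^ 4 = 1) → B (∑ k, ζ k • x k) (∑ k, ζ k • x k) = c)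
    {ζ : ι → ℂ} (hζ : ∀ k, ζ k ^ 4 = 1) (j : ι) :
    B (x j) (∑ k, ζ k • x k) = starRingEnd ℂ (ζ j) • B (x j) (x j) := by
  classical
  have cross : B (x j) (∑ k, ζ k • x k - ζ j • x j) = 0 := by
    refine sesquilinear_cross_eq_zero (c := c) fun w hw => ?_
    rw [← sum_update_smul]
    exact h _ ((Function.forall_update_iff ζ fun _ z => z ^ 4 = 1).mpr ⟨hw, fun k _ => hζ k⟩)
  rwa [map_sub, sub_eq_zero, LinearMap.map_smulₛₗ] at cross

theorem sesquilinear_eq_zero_of_const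
    (h : ∀ ζ : ι → ℂ, (∀ k, ζ k ^ 4 = 1) → B (∑ k, ζ k • x k) (∑ k, ζ k • x k) = c)
    {j k : ι} (hjk : j ≠ k) : B (x j) (x k) = 0 := by
  classical
  have at_one := sesquilinear_apply_sum_of_const h (ζ := 1) (fun _ => one_pow 4) j
  have at_flip := sesquilinear_apply_sum_of_const h (ζ := Function.update 1 k (-1))
    ((Function.forall_update_iff _ fun _ z => z ^ 4 = 1).mpr
      ⟨by norm_num, fun _ _ => one_pow 4⟩) j
  rw [Function.update_of_ne hjk, ← at_one, sum_update_smul, Pi.one_apply] at at_flip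
  have two_smul_eq_zero : (2 : ℂ) • B (x j) (x k) = 0 := by
    simp only [map_add, map_sub, neg_smul, one_smul, map_neg] at at_flip
    linear_combination (norm := module) -at_flip
  exact (smul_eq_zero.mp two_smul_eq_zero).resolve_left two_ne_zero

theorem sesquilinear_sum_diag_of_const
    (h : ∀ ζ : ι → ℂ, (∀ k, ζ k ^ 4 = 1) → B (∑ k, ζ k • x k) (∑ k, ζ k • x k) = c) :
    ∑ k, B (x k) (x k) = c := by
  have diag (j : ι) : B (x j) (∑ k, x k) = B (x j) (x j) := by
    simpa using sesquilinear_apply_sum_of_const h (ζ := 1) (fun _ => one_pow 4) j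
  calc ∑ k, B (x k) (x k) = B (∑ k, x k) (∑ k, x k) := by
        simp only [map_sum B, LinearMap.sum_apply, diag]
    _ = c := by simpa using h 1 fun _ => one_pow 4

end Sesquilinear

theorem unitary_pencil_structure_general {ι A : Type*} [Fintype ι] [Ring A] [StarRing A]
    [Algebra ℂ A] [StarModule ℂ A] (u : ι → A)
    (hu : ∀ ζ : ι → ℂ, (∀ k, ζ k ^ 4 = 1) → ∑ k, ζ k • u k ∈ unitary A) :
    ∑ k, u k * star (u k) = 1 ∧ ∑ k, star (u k) * u k = 1 ∧
      (∀ j k, j ≠ k → u j * star (u k) = 0) ∧ (∀ j k, j ≠ k → star (u j) * u k = 0) := by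
  let mulStar : A →ₗ[ℂ] A →ₗ⋆[ℂ] A := (LinearMap.mul ℂ A).compl₂ (starLinearEquiv ℂ).toLinearMap
  let starMul : A →ₗ[ℂ] A →ₗ⋆[ℂ] A :=
    (LinearMap.mul ℂ A).flip.compl₂ (starLinearEquiv ℂ).toLinearMap
  have mulStar_const (ζ : ι → ℂ) (hζ : ∀ k, ζ k ^ 4 = 1) :
      mulStar (∑ k, ζ k • u k) (∑ k, ζ k • u k) = 1 :=
    Unitary.mul_star_self_of_mem (hu ζ hζ)
  have starMul_const (ζ : ι → ℂ) (hζ : ∀ k, ζ k ^ 4 = 1) :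
      starMul (∑ k, ζ k • u k) (∑ k, ζ k • u k) = 1 :=
    Unitary.star_mul_self_of_mem (hu ζ hζ)
  exact ⟨sesquilinear_sum_diag_of_const mulStar_const,
    sesquilinear_sum_diag_of_const starMul_const,
    fun _ _ hjk => sesquilinear_eq_zero_of_const mulStar_const hjk,
    fun _ _ hjk => sesquilinear_eq_zero_of_const starMul_const hjk.symm⟩

theorem isUnitaryOp_iff_mem_unitary {Y : Type*} [NormedAddCommGroup Y] [InnerProductSpace ℂ Y]
    [CompleteSpace Y] {T : Y →L[ℂ] Y} : IsUnitaryOp T ↔ T ∈ unitary (Y →L[ℂ] Y) :=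
  and_comm

/-- if `ζ₁U₁ + ⋯ + ζ_N U_N` is unitary for every unimodular `ζ ∈ ℂ^N`, then
`Σ U_k U_k* = I`, `Σ U_k* U_k = I`, and `U_j U_k* = 0`, `U_j* U_k = 0` for `j ≠ k`. -/
theorem unitary_pencil_structure (N : ℕ) (hN : 1 ≤ N)
    {Y : Type*} [NormedAddCommGroup Y] [InnerProductSpace ℂ Y] [CompleteSpace Y]
    (U : Fin N → Y →L[ℂ] Y)
    (hU : ∀ ζ : Fin N → ℂ, (∀ k, ‖ζ k‖ = 1) → IsUnitaryOp (∑ k, ζ k • U k)) :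
    (∑ k, U k ∘L adjoint (U k)) = 1 ∧ (∑ k, adjoint (U k) ∘L U k) = 1 ∧
      (∀ j k, j ≠ k → U j ∘L adjoint (U k) = 0) ∧
      (∀ j k, j ≠ k → adjoint (U j) ∘L U k = 0) :=
  unitary_pencil_structure_general U fun ζ hζ => isUnitaryOp_iff_mem_unitary.mp <|
    hU ζ fun k => Complex.norm_eq_one_of_pow_eq_one (hζ k) four_ne_zero
end
end

section
/- Let X be a complex Hilbert space and A = (A₁, A₂) a pair of bounded linear operators on X. Suppose A is simultaneously similar to some pair T = (T₁, T₂) belonging to the class C_{1,2}, i.e. there are a complex Hilbert space Y, a pair T ∈ C_{1,2} of bounded operators on Y, and a boundedly invertible operator S : X → Y with A_k = S^{−1} T_k S for k = 1, 2. Then there exists M > 0 such that ‖[(A₁+A₂)(A₁−A₂)]ⁿ‖ ≤ M for all integers n ≥ 1. -/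
open ContinuousLinearMap

noncomputable section

/-- A unitary `ρ`-dilation of an `N`-tuple of bounded operators on a complex Hilbert space `X`:
a complex Hilbert space `Y`, a linear isometry `ι : X → Y`, and an `N`-tuple `At` of operators
on `Y` such that every unimodular combination `ζ₁At₁ + ⋯ + ζ_N At_N` is unitary, and
`(z₁A₁ + ⋯ + z_N A_N)ⁿ = ρ · ι* ∘ (z₁At₁ + ⋯ + z_N At_N)ⁿ ∘ ι` for all `z ∈ ℂ^N` and `n ≥ 1`. -/
structure UnitaryRhoDilation (N : ℕ) (ρ : ℝ) (X : Type*) [NormedAddCommGroup X]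
    [InnerProductSpace ℂ X] [CompleteSpace X] (A : Fin N → X →L[ℂ] X) where
  Y : Type
  [instN : NormedAddCommGroup Y]
  [instI : InnerProductSpace ℂ Y]
  [instC : CompleteSpace Y]
  ι : X →L[ℂ] Y
  isom : Isometry ι
  At : Fin N → Y →L[ℂ] Y
  unit : ∀ ζ : Fin N → ℂ, (∀ k, ‖ζ k‖ = 1) → IsUnitaryOp (∑ k, ζ k • At k)
  dil : ∀ (z : Fin N → ℂ) (n : ℕ), 1 ≤ n →
    (∑ k, z k • A k) ^ n = (ρ : ℂ) • (adjoint ι ∘L (((∑ k, z k • At k) ^ n) ∘L ι))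

/-- The class `C_{ρ,N}`: `N`-tuples of bounded operators admitting a unitary `ρ`-dilation. -/
def MemC (N : ℕ) (ρ : ℝ) {X : Type*} [NormedAddCommGroup X] [InnerProductSpace ℂ X]
    [CompleteSpace X] (A : Fin N → X →L[ℂ] X) : Prop :=
  Nonempty (UnitaryRhoDilation N ρ X A)

/-! A unimodular combination of `T` is `ρ` times a compression of a unitary operator, so it is a
contraction when `|ρ| ≤ 1`. The contractions form a multiplicative semigroup, and conjugation
by `S` is an algebra isomorphism that scales norms by at most `‖S⁻¹‖ ‖S‖`. Hence the whole semigroup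
generated by the unimodular combinations of `A` is bounded by that constant; it contains
`A₁ + A₂` and `A₁ - A₂`, which have coefficients `(1, 1)` and `(1, -1)`. -/

theorem norm_le_one_of_mem_submonoidClosure {R : Type*} [SeminormedRing R] (h_one : ‖(1 : R)‖ ≤ 1)
    {s : Set R} (hs : ∀ a ∈ s, ‖a‖ ≤ 1) {a : R} (ha : a ∈ Submonoid.closure s) : ‖a‖ ≤ 1 := by
  induction ha using Submonoid.closure_induction with
  | mem a ha => exact hs a ha
  | one => exact h_one
  | mul a b _ _ iha ihb => exact (norm_mul_le a b).trans (mul_le_one₀ iha (norm_nonneg b) ihb)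

theorem opNorm_le_one_of_isometry {𝕜 E F : Type*} [NontriviallyNormedField 𝕜]
    [SeminormedAddCommGroup E] [NormedSpace 𝕜 E] [SeminormedAddCommGroup F] [NormedSpace 𝕜 F]
    {V : E →L[𝕜] F} (hV : Isometry V) : ‖V‖ ≤ 1 :=
  opNorm_le_of_lipschitz hV.lipschitz

theorem opNorm_comp_comp_le {𝕜 E F G H : Type*} [NontriviallyNormedField 𝕜]
    [SeminormedAddCommGroup E] [NormedSpace 𝕜 E] [SeminormedAddCommGroup F] [NormedSpace 𝕜 F]
    [SeminormedAddCommGroup G] [NormedSpace 𝕜 G] [SeminormedAddCommGroup H] [NormedSpace 𝕜 H]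
    (P : G →L[𝕜] H) (B : F →L[𝕜] G) (Q : E →L[𝕜] F) : ‖P ∘L B ∘L Q‖ ≤ ‖P‖ * ‖B‖ * ‖Q‖ :=
  calc ‖P ∘L B ∘L Q‖
    _ ≤ ‖P ∘L B‖ * ‖Q‖ := opNorm_comp_le (P ∘L B) Q
    _ ≤ ‖P‖ * ‖B‖ * ‖Q‖ := by gcongr; exact opNorm_comp_le P B

theorem IsUnitaryOp.norm_le_one {Y : Type*} [NormedAddCommGroup Y] [InnerProductSpace ℂ Y]
    [CompleteSpace Y] {U : Y →L[ℂ] Y} (hU : IsUnitaryOp U) : ‖U‖ ≤ 1 :=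
  opNorm_le_one_of_isometry (U.isometry_iff_adjoint_comp_self.2 hU.2)

theorem norm_compression_le {𝕜 X Y : Type*} [RCLike 𝕜] [NormedAddCommGroup X]
    [InnerProductSpace 𝕜 X] [CompleteSpace X] [NormedAddCommGroup Y] [InnerProductSpace 𝕜 Y]
    [CompleteSpace Y] {V : X →L[𝕜] Y} (hV : Isometry V) (B : Y →L[𝕜] Y) :
    ‖adjoint V ∘L B ∘L V‖ ≤ ‖B‖ :=
  calc ‖adjoint V ∘L B ∘L V‖
    _ ≤ ‖adjoint V‖ * ‖B‖ * ‖V‖ := opNorm_comp_comp_le (adjoint V) B V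
    _ = ‖V‖ * ‖B‖ * ‖V‖ := by rw [LinearIsometryEquiv.norm_map]
    _ ≤ 1 * ‖B‖ * 1 := by gcongr <;> exact opNorm_le_one_of_isometry hV
    _ = ‖B‖ := by rw [one_mul, mul_one]

/-- The unimodular combinations `∑ k, ζ k • a k`, `‖ζ k‖ = 1`, of a finite family in a complex
vector space. -/
def unimodularCombinations {κ E : Type*} [Fintype κ] [AddCommMonoid E] [Module ℂ E] (a : κ → E) :
    Set E :=
  (fun ζ : κ → ℂ => ∑ k, ζ k • a k) '' {ζ | ∀ k, ‖ζ k‖ = 1}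

theorem image_unimodularCombinations {κ E F Φ : Type*} [Fintype κ] [AddCommMonoid E] [Module ℂ E]
    [AddCommMonoid F] [Module ℂ F] [FunLike Φ E F] [LinearMapClass Φ ℂ E F] (f : Φ) (a : κ → E) :
    f '' unimodularCombinations a = unimodularCombinations (f ∘ a) := by
  simp only [unimodularCombinations, Set.image_image, map_sum, map_smul, Function.comp_apply]

theorem add_mem_unimodularCombinations {E : Type*} [AddCommMonoid E] [Module ℂ E] (a : Fin 2 → E) :
    a 0 + a 1 ∈ unimodularCombinations a :=
  ⟨![1, 1], by simp [Fin.forall_fin_two], by simp⟩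

theorem sub_mem_unimodularCombinations {E : Type*} [AddCommGroup E] [Module ℂ E] (a : Fin 2 → E) :
    a 0 - a 1 ∈ unimodularCombinations a :=
  ⟨![1, -1], by simp [Fin.forall_fin_two], by simp [sub_eq_add_neg]⟩

theorem add_mul_sub_mem_closure_unimodularCombinations {R : Type*} [Ring R] [Module ℂ R]
    (a : Fin 2 → R) : (a 0 + a 1) * (a 0 - a 1) ∈ Submonoid.closure (unimodularCombinations a) :=
  mul_mem (Submonoid.subset_closure (add_mem_unimodularCombinations a))
    (Submonoid.subset_closure (sub_mem_unimodularCombinations a))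

section Dilations

variable {N : ℕ} {ρ : ℝ} {Y : Type*} [NormedAddCommGroup Y] [InnerProductSpace ℂ Y]
  [CompleteSpace Y] {T : Fin N → Y →L[ℂ] Y}

theorem MemC.norm_le_of_mem_unimodularCombinations (hT : MemC N ρ T) {B : Y →L[ℂ] Y}
    (hB : B ∈ unimodularCombinations T) : ‖B‖ ≤ |ρ| := by
  obtain ⟨D⟩ := hT
  obtain ⟨ζ, hζ, rfl⟩ := hB
  let _ := D.instN
  let _ := D.instI
  let _ := D.instC
  set U := ∑ k, ζ k • D.At k
  have dilation : ∑ k, ζ k • T k = (ρ : ℂ) • (adjoint D.ι ∘L U ∘L D.ι) := by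
    simpa only [pow_one] using D.dil ζ 1 le_rfl
  calc ‖∑ k, ζ k • T k‖
    _ = |ρ| * ‖adjoint D.ι ∘L U ∘L D.ι‖ := by
      rw [dilation, norm_smul, Complex.norm_real, Real.norm_eq_abs]
    _ ≤ |ρ| * ‖U‖ := by gcongr; exact norm_compression_le D.isom U
    _ ≤ |ρ| := mul_le_of_le_one_right (abs_nonneg ρ) (D.unit ζ hζ).norm_le_one

theorem MemC.norm_le_one_of_mem_closure_unimodularCombinations (hT : MemC N ρ T) (hρ : |ρ| ≤ 1)
    {B : Y →L[ℂ] Y} (hB : B ∈ Submonoid.closure (unimodularCombinations T)) : ‖B‖ ≤ 1 :=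
  norm_le_one_of_mem_submonoidClosure norm_id_le
    (fun _ hC => (hT.norm_le_of_mem_unimodularCombinations hC).trans hρ) hB

end Dilations

theorem bounded_powers_of_similar_to_C1_general {N : ℕ} {ρ : ℝ} (hρ : |ρ| ≤ 1) {X : Type*}
    [NormedAddCommGroup X] [NormedSpace ℂ X] (A : Fin N → X →L[ℂ] X) {Y : Type*}
    [NormedAddCommGroup Y] [InnerProductSpace ℂ Y] [CompleteSpace Y] (T : Fin N → Y →L[ℂ] Y)
    (hT : MemC N ρ T) (S : X ≃L[ℂ] Y)
    (hS : ∀ k, A k = (S.symm : Y →L[ℂ] X) ∘L (T k ∘L (S : X →L[ℂ] Y))) {B : X →L[ℂ] X}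
    (hB : B ∈ Submonoid.closure (unimodularCombinations A)) :
    ‖B‖ ≤ ‖(S.symm : Y →L[ℂ] X)‖ * ‖(S : X →L[ℂ] Y)‖ := by
  let conj := S.symm.conjContinuousAlgEquiv
  have hA : A = conj ∘ T := funext hS
  rw [hA, ← image_unimodularCombinations, ← MonoidHom.map_mclosure] at hB
  obtain ⟨C, hC, rfl⟩ := hB
  calc ‖(S.symm : Y →L[ℂ] X) ∘L C ∘L (S : X →L[ℂ] Y)‖
    _ ≤ ‖(S.symm : Y →L[ℂ] X)‖ * ‖C‖ * ‖(S : X →L[ℂ] Y)‖ := opNorm_comp_comp_le _ C _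
    _ ≤ ‖(S.symm : Y →L[ℂ] X)‖ * 1 * ‖(S : X →L[ℂ] Y)‖ := by
      gcongr
      exact hT.norm_le_one_of_mem_closure_unimodularCombinations hρ hC
    _ = ‖(S.symm : Y →L[ℂ] X)‖ * ‖(S : X →L[ℂ] Y)‖ := by rw [mul_one]

/-- if a pair `A = (A₁, A₂)` of operators on `X` is simultaneously similar to
some pair `T ∈ C_{1,2}`, then the powers `[(A₁+A₂)(A₁−A₂)]ⁿ` are uniformly bounded in norm. -/
theorem bounded_powers_of_similar_to_C1 {X : Type*} [NormedAddCommGroup X]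
    [InnerProductSpace ℂ X] [CompleteSpace X] (A : Fin 2 → X →L[ℂ] X)
    {Y : Type*} [NormedAddCommGroup Y] [InnerProductSpace ℂ Y] [CompleteSpace Y]
    (T : Fin 2 → Y →L[ℂ] Y) (hT : MemC 2 1 T) (S : X ≃L[ℂ] Y)
    (hS : ∀ k, A k = (S.symm : Y →L[ℂ] X) ∘L (T k ∘L (S : X →L[ℂ] Y))) :
    ∃ M : ℝ, 0 < M ∧ ∀ n : ℕ, 1 ≤ n → ‖((A 0 + A 1) ∘L (A 0 - A 1)) ^ n‖ ≤ M := by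
  have h_mem := add_mul_sub_mem_closure_unimodularCombinations A
  exact ⟨‖(S.symm : Y →L[ℂ] X)‖ * ‖(S : X →L[ℂ] Y)‖ + 1, by positivity, fun n _ =>
    (bounded_powers_of_similar_to_C1_general abs_one.le A T hT S hS
      (pow_mem h_mem n)).trans (lt_add_one _).le⟩
end
end

section
/- Let N ≥ 1, ρ > 0, and let A = (A₁,…,A_N) be an N-tuple of bounded linear operators on a complex Hilbert space X admitting a uniform unitary ρ-dilation (i.e. A ∈ C^u_{ρ,N}). Then A is simultaneously similar to an N-tuple T = (T₁,…,T_N) admitting a uniform unitary 1-dilation: there exist a complex Hilbert space 𝒩, an N-tuple T of bounded operators on 𝒩 belonging to C^u_{1,N}, and a boundedly invertible operator S : X → 𝒩 with A_k = S^{−1} T_k S for all k = 1,…,N. -/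
open ContinuousLinearMap

noncomputable section

/-- A uniform unitary `ρ`-dilation of an `N`-tuple of bounded operators on a complex Hilbert
space `X`: a complex Hilbert space `Y`, a linear isometry `ι : X → Y`, and an `N`-tuple `At`
of operators on `Y` such that every unimodular combination `ζ₁At₁ + ⋯ + ζ_N At_N` is unitary,
and for every nonempty word `i₁,…,iₙ` one has
`A_{i₁}⋯A_{iₙ} = ρ · ι* ∘ (At_{i₁}⋯At_{iₙ}) ∘ ι`. -/
structure UniformUnitaryRhoDilation (N : ℕ) (ρ : ℝ) (X : Type*) [NormedAddCommGroup X]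
    [InnerProductSpace ℂ X] [CompleteSpace X] (A : Fin N → X →L[ℂ] X) where
  Y : Type
  [instN : NormedAddCommGroup Y]
  [instI : InnerProductSpace ℂ Y]
  [instC : CompleteSpace Y]
  ι : X →L[ℂ] Y
  isom : Isometry ι
  At : Fin N → Y →L[ℂ] Y
  unit : ∀ ζ : Fin N → ℂ, (∀ k, ‖ζ k‖ = 1) → IsUnitaryOp (∑ k, ζ k • At k)
  dil : ∀ w : List (Fin N), w ≠ [] →
    (w.map A).prod = (ρ : ℂ) • (adjoint ι ∘L ((w.map At).prod ∘L ι))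

/-- The class `C^u_{ρ,N}`: `N`-tuples admitting a uniform unitary `ρ`-dilation. -/
def MemCu (N : ℕ) (ρ : ℝ) {X : Type*} [NormedAddCommGroup X] [InnerProductSpace ℂ X]
    [CompleteSpace X] (A : Fin N → X →L[ℂ] X) : Prop :=
  Nonempty (UniformUnitaryRhoDilation N ρ X A)

/-- A witness that the `N`-tuple `A` on `X` is simultaneously similar to some `N`-tuple
`T ∈ C^u_{1,N}` of operators on a complex Hilbert space `Nsp`. -/
structure SimilarToCu1Witness (N : ℕ) (X : Type*) [NormedAddCommGroup X]
    [InnerProductSpace ℂ X] [CompleteSpace X] (A : Fin N → X →L[ℂ] X) where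
  Nsp : Type
  [instN : NormedAddCommGroup Nsp]
  [instI : InnerProductSpace ℂ Nsp]
  [instC : CompleteSpace Nsp]
  T : Fin N → Nsp →L[ℂ] Nsp
  memT : MemCu N 1 T
  S : X ≃L[ℂ] Nsp
  sim : ∀ k, A k = (S.symm : Nsp →L[ℂ] X) ∘L (T k ∘L (S : X →L[ℂ] Nsp))

/-!
If `Φ V_{i₁}⋯V_{iₙ} J = A_{i₁}⋯A_{iₙ}` for all words, the empty one included, let `M` be the largest
`V`-invariant subspace on which `Φ` intertwines `V` and `A`. It contains the range of `J`, so `Φ`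
maps `M ⊖ (M ∩ ker Φ)` isomorphically onto `X`; this isomorphism turns `A` into the compression of
`V`, and since the subspace is semi-invariant the compression is multiplicative on words. If `V` is
uniformly unitary, this makes `V` a `1`-dilation of a tuple similar to `A`.

A `ρ`-dilation `U` only gives `f(A) = ι* (ρ f(U) + (1 - ρ) f(0)) ι` for noncommutative polynomials
`f`. Both `f(U)` and `f(0)` are matrix entries of `f(V)` for the uniformly unitary tuple
`V k = S ⊗ U k`, where `S` is a permutation operator on `ℓ²` with one fixed basis vector and one
that never returns to itself.
-/

theorem isComplete_inter_of_isClosed {α : Type*} [UniformSpace α] {s t : Set α}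
    (hs : IsComplete s) (ht : IsClosed t) : IsComplete (s ∩ t) := by
  intro f hf hfst
  obtain ⟨x, hxs, hfx⟩ := hs f hf (hfst.trans (Filter.principal_mono.2 Set.inter_subset_left))
  have hft : f ≤ Filter.principal t := hfst.trans (Filter.principal_mono.2 Set.inter_subset_right)
  have := hf.1
  exact ⟨x, ⟨hxs, isClosed_iff_clusterPt.1 ht x (.mono (.of_le_nhds hfx) hft)⟩, hfx⟩

section KerComplement

variable {𝕜 X H : Type*} [RCLike 𝕜] [NormedAddCommGroup X] [NormedSpace 𝕜 X]
  [NormedAddCommGroup H] [InnerProductSpace 𝕜 H]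

/-- The orthogonal complement of `M ∩ ker Φ` within `M`. If `M` and `M ∩ ker Φ` are invariant
under an operator, this is a semi-invariant subspace in the sense of Sarason. -/
def kerComplement (M : Submodule 𝕜 H) (Φ : H →L[𝕜] X) : Submodule 𝕜 H :=
  M ⊓ (M ⊓ Φ.ker)ᗮ

variable {M : Submodule 𝕜 H} {Φ : H →L[𝕜] X}

instance [CompleteSpace M] : CompleteSpace (kerComplement M Φ) := by
  have hM : IsComplete (M : Set H) := completeSpace_coe_iff_isComplete.1 ‹_›
  exact (isComplete_inter_of_isClosed hM (Submodule.isClosed_orthogonal _)).completeSpace_coe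

theorem ker_comp_subtypeL_kerComplement : (Φ ∘L (kerComplement M Φ).subtypeL).ker = ⊥ := by
  refine (Submodule.eq_bot_iff _).2 fun n hn => Subtype.ext ?_
  have hker : (n : H) ∈ M ⊓ Φ.ker := ⟨n.2.1, hn⟩
  exact inner_self_eq_zero.1 (n.2.2 _ hker)

theorem range_comp_subtypeL_kerComplement [CompleteSpace M] (hΦ : Set.SurjOn Φ M Set.univ) :
    (Φ ∘L (kerComplement M Φ).subtypeL).range = ⊤ := by
  have : CompleteSpace ↥(M ⊓ Φ.ker) :=
    (isComplete_inter_of_isClosed (completeSpace_coe_iff_isComplete.1 ‹CompleteSpace M›)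
      Φ.isClosed_ker).completeSpace_coe
  refine LinearMap.range_eq_top.2 fun x => ?_
  obtain ⟨m, hm, rfl⟩ := hΦ (Set.mem_univ x)
  obtain ⟨y, hy, z, hz, rfl⟩ := (M ⊓ Φ.ker).exists_add_mem_mem_orthogonal m
  have hzM : z ∈ M := (M.add_mem_iff_right hy.1).1 hm
  have hΦy : Φ y = 0 := hy.2
  exact ⟨⟨z, hzM, hz⟩, by simp [hΦy]⟩

/-- The first isomorphism theorem for `Φ : M → X`, with the quotient `M / (M ∩ ker Φ)` realized
inside `M` as an orthogonal complement. -/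
def kerComplementEquiv [CompleteSpace X] [CompleteSpace M] (hΦ : Set.SurjOn Φ M Set.univ) :
    kerComplement M Φ ≃L[𝕜] X :=
  .ofBijective (Φ ∘L (kerComplement M Φ).subtypeL) ker_comp_subtypeL_kerComplement
    (range_comp_subtypeL_kerComplement hΦ)

theorem compression_kerComplement_eq_conj [CompleteSpace X] [CompleteSpace M]
    (hΦ : Set.SurjOn Φ M Set.univ) {V : H →L[𝕜] H} {B : X →L[𝕜] X}
    (hVM : Set.MapsTo V M M) (hVB : ∀ y ∈ M, Φ (V y) = B (Φ y)) :
    (kerComplement M Φ).orthogonalProjectionOnto ∘L V ∘L (kerComplement M Φ).subtypeL =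
      (kerComplementEquiv hΦ).symm.conjContinuousAlgEquiv B := by
  ext n
  set n' := (kerComplementEquiv hΦ).symm (B (kerComplementEquiv hΦ n))
  have hΦn' : Φ n' = B (Φ n) := (kerComplementEquiv hΦ).apply_symm_apply _
  have hdiff : V n - n' ∈ M ⊓ Φ.ker :=
    ⟨M.sub_mem (hVM n.2.1) n'.2.1, by simp [hΦn', hVB n n.2.1]⟩
  exact Submodule.eq_starProjection_of_mem_orthogonal n'.2
    ((Submodule.isOrtho_iff_le.2 inf_le_right).symm hdiff)

end KerComplement

section Words

variable {κ 𝕜 X H : Type*} [RCLike 𝕜] [NormedAddCommGroup X] [NormedSpace 𝕜 X]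
  [NormedAddCommGroup H] [InnerProductSpace 𝕜 H]

/-- The largest subspace invariant under all `V k` on which `Φ` intertwines the tuples `V` and
`A`. -/
def intertwiningSubmodule (A : κ → X →L[𝕜] X) (V : κ → H →L[𝕜] H) (Φ : H →L[𝕜] X) :
    Submodule 𝕜 H :=
  ⨅ w : List κ, (Φ ∘L (w.map V).prod - (w.map A).prod ∘L Φ).ker

variable {A : κ → X →L[𝕜] X} {V : κ → H →L[𝕜] H} {Φ : H →L[𝕜] X}

theorem mem_intertwiningSubmodule {y : H} :
    y ∈ intertwiningSubmodule A V Φ ↔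
      ∀ w : List κ, Φ ((w.map V).prod y) = (w.map A).prod (Φ y) := by
  simp [intertwiningSubmodule, sub_eq_zero]

instance [CompleteSpace H] : CompleteSpace (intertwiningSubmodule A V Φ) := by
  have hclosed : IsClosed (intertwiningSubmodule A V Φ : Set H) := by
    simp only [intertwiningSubmodule, Submodule.coe_iInf]
    exact isClosed_iInter fun w => ContinuousLinearMap.isClosed_ker _
  exact hclosed.isComplete.completeSpace_coe

theorem mapsTo_prod_intertwiningSubmodule (w : List κ) :
    Set.MapsTo (w.map V).prod (intertwiningSubmodule A V Φ) (intertwiningSubmodule A V Φ) := by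
  intro y hy
  simp only [SetLike.mem_coe, mem_intertwiningSubmodule] at hy ⊢
  intro v
  simpa [hy w] using hy (v ++ w)

theorem surjOn_intertwiningSubmodule {J : X → H}
    (hJ : ∀ (w : List κ) x, Φ ((w.map V).prod (J x)) = (w.map A).prod x) :
    Set.SurjOn Φ (intertwiningSubmodule A V Φ) Set.univ := by
  have hΦJ (x : X) : Φ (J x) = x := by simpa using hJ [] x
  exact fun x _ => ⟨J x, mem_intertwiningSubmodule.2 fun w => by rw [hJ, hΦJ], hΦJ x⟩

end Words

section LpCongrLeft

open scoped ENNReal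

variable {I I' 𝕜 E : Type*} [RCLike 𝕜] [NormedAddCommGroup E] [NormedSpace 𝕜 E] {p : ℝ≥0∞}

theorem memℓp_comp_injective_s11 {φ : I' → I} (hφ : Function.Injective φ) {f : I → E}
    (hf : Memℓp f p) : Memℓp (f ∘ φ) p := by
  rcases p.trichotomy with rfl | rfl | hp
  · exact memℓp_zero (hf.finite_dsupport.preimage hφ.injOn)
  · exact memℓp_infty (hf.bddAbove.mono (Set.range_comp_subset_range φ fun i => ‖f i‖))
  · exact memℓp_gen ((hf.summable hp).comp_injective hφ)

variable (𝕜 E p) in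
/-- Reindexing `f ↦ f ∘ e` as an isometric equivalence of `ℓᵖ` spaces. -/
def lpCongrLeft [Fact (1 ≤ p)] (e : I' ≃ I) :
    lp (fun _ : I => E) p ≃ₗᵢ[𝕜] lp (fun _ : I' => E) p where
  toFun f := ⟨f ∘ e, memℓp_comp_injective_s11 e.injective (lp.memℓp f)⟩
  invFun f := ⟨f ∘ e.symm, memℓp_comp_injective_s11 e.symm.injective (lp.memℓp f)⟩
  map_add' _ _ := rfl
  map_smul' _ _ := rfl
  left_inv f := by ext; simp
  right_inv f := by ext; simp
  norm_map' f := by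
    change ‖(⟨f ∘ e, memℓp_comp_injective_s11 e.injective (lp.memℓp f)⟩ : lp (fun _ : I' => E) p)‖ = ‖f‖
    rcases ENNReal.dichotomy p with rfl | hp
    · simpa [lp.norm_eq_ciSup] using e.surjective.iSup_comp fun i => ‖f i‖
    · have hp' : 0 < p.toReal := by positivity
      simpa [lp.norm_eq_tsum_rpow hp'] using
        congrArg (· ^ (1 / p.toReal)) (e.tsum_eq fun i => ‖f i‖ ^ p.toReal)

end LpCongrLeft

section TwistedAmpliation

variable {κ I 𝕜 Y : Type*} [RCLike 𝕜] [NormedAddCommGroup Y] [InnerProductSpace 𝕜 Y]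
  [CompleteSpace Y]

variable (I 𝕜 Y) in
/-- The ampliation `B ↦ 1 ⊗ B` of operators on `Y` to `ℓ²(I, Y) = ℓ²(I) ⊗ Y`. -/
def ampliation :
    (Y →L[𝕜] Y) →⋆ₐ[𝕜] (lp (fun _ : I => Y) 2 →L[𝕜] lp (fun _ : I => Y) 2) where
  toFun B := lp.mapCLM 2 (fun _ => B) (norm_nonneg B) fun _ => le_rfl
  map_one' := rfl
  map_mul' _ _ := rfl
  map_zero' := rfl
  map_add' _ _ := rfl
  commutes' _ := rfl
  map_star' B := by
    simp only [star_eq_adjoint, ContinuousLinearMap.eq_adjoint_iff]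
    intro f g
    simp [lp.inner_eq_tsum, adjoint_inner_left]

/-- The operator `S ⊗ B` on `ℓ²(I, Y) = ℓ²(I) ⊗ Y`, where `S` is composition with the
permutation `e`. -/
def twistedAmpliation (e : Equiv.Perm I) (B : Y →L[𝕜] Y) :
    lp (fun _ : I => Y) 2 →L[𝕜] lp (fun _ : I => Y) 2 :=
  (lpCongrLeft 𝕜 Y 2 e : lp (fun _ : I => Y) 2 →L[𝕜] lp (fun _ : I => Y) 2) * ampliation I 𝕜 Y B

theorem twistedAmpliation_apply (e : Equiv.Perm I) (B : Y →L[𝕜] Y) (f : lp (fun _ : I => Y) 2)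
    (i : I) : twistedAmpliation e B f i = B (f (e i)) :=
  rfl

theorem twistedAmpliation_mem_unitary (e : Equiv.Perm I) {B : Y →L[𝕜] Y}
    (hB : B ∈ unitary (Y →L[𝕜] Y)) :
    twistedAmpliation e B ∈ unitary (lp (fun _ : I => Y) 2 →L[𝕜] lp (fun _ : I => Y) 2) :=
  mul_mem (Unitary.linearIsometryEquiv.symm (lpCongrLeft 𝕜 Y 2 e)).2
    (Unitary.map_mem (ampliation I 𝕜 Y) hB)

theorem sum_smul_twistedAmpliation [Fintype κ] (e : Equiv.Perm I) (ζ : κ → 𝕜)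
    (U : κ → Y →L[𝕜] Y) :
    ∑ k, ζ k • twistedAmpliation e (U k) = twistedAmpliation e (∑ k, ζ k • U k) := by
  simp only [twistedAmpliation, map_sum, map_smul, Finset.mul_sum, mul_smul_comm]

theorem prod_map_twistedAmpliation_apply (e : Equiv.Perm I) (U : κ → Y →L[𝕜] Y) (w : List κ)
    (f : lp (fun _ : I => Y) 2) (i : I) :
    (w.map fun k => twistedAmpliation e (U k)).prod f i = (w.map U).prod (f (e^[w.length] i)) := by
  induction w generalizing i with
  | nil => simp
  | cons k w ih =>
    simp only [List.map_cons, List.prod_cons, mul_apply_eq_comp, twistedAmpliation_apply, ih,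
      List.length_cons, Function.iterate_succ_apply]

end TwistedAmpliation

section RhoCompression

variable {κ I 𝕜 X Y : Type*} [RCLike 𝕜] [NormedAddCommGroup Y] [InnerProductSpace 𝕜 Y]
  [CompleteSpace Y] [DecidableEq I] {e : Equiv.Perm I} {a b : I}

theorem prod_map_twistedAmpliation_single_add_single_fixed (ha : Function.IsFixedPt e a)
    (hab : a ≠ b) (U : κ → Y →L[𝕜] Y) (w : List κ) (y z : Y) :
    (w.map fun k => twistedAmpliation e (U k)).prod (lp.single 2 a y + lp.single 2 b z) a =
      (w.map U).prod y := by
  simp [prod_map_twistedAmpliation_apply, (ha.iterate _).eq, lp.single_apply, hab]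

theorem prod_map_twistedAmpliation_single_add_single_wandering (ha : Function.IsFixedPt e a)
    (hab : a ≠ b) (hb : b ∉ Function.periodicPts e) (U : κ → Y →L[𝕜] Y) {w : List κ}
    (hw : w ≠ []) (y z : Y) :
    (w.map fun k => twistedAmpliation e (U k)).prod (lp.single 2 a y + lp.single 2 b z) b = 0 := by
  have hiter_ne_a : e^[w.length] b ≠ a := fun h =>
    hab (e.injective.iterate w.length ((ha.iterate _).eq.trans h.symm))
  have hiter_ne_b : e^[w.length] b ≠ b := fun h =>
    hb (Function.mk_mem_periodicPts (List.length_pos_iff.2 hw) h)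
  simp [prod_map_twistedAmpliation_apply, lp.single_apply, hiter_ne_a, hiter_ne_b]

/-- The coordinate `a` carries `f(U)`, and the coordinate `b`, which every nonempty word
annihilates, carries `f(0)`, for a word `f`. -/
theorem rho_compression_eq_prod [NormedAddCommGroup X] [NormedSpace 𝕜 X]
    (ha : Function.IsFixedPt e a) (hb : b ∉ Function.periodicPts e)
    {A : κ → X →L[𝕜] X} {U : κ → Y →L[𝕜] Y} {ρ : 𝕜} {P : Y →L[𝕜] X} {J : X → Y}
    (hPJ : ∀ x, P (J x) = x)
    (hA : ∀ w : List κ, w ≠ [] → ∀ x, (w.map A).prod x = ρ • P ((w.map U).prod (J x)))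
    (w : List κ) (x : X) :
    (P ∘L (ρ • lp.evalCLM 𝕜 (fun _ : I => Y) 2 a + (1 - ρ) • lp.evalCLM 𝕜 (fun _ => Y) 2 b))
        ((w.map fun k => twistedAmpliation e (U k)).prod
          (lp.single 2 a (J x) + lp.single 2 b (J x))) =
      (w.map A).prod x := by
  have hab : a ≠ b := by
    rintro rfl
    exact hb (Function.mk_mem_periodicPts one_pos ha)
  change P (ρ • (w.map fun k => twistedAmpliation e (U k)).prod _ a +
    (1 - ρ) • (w.map fun k => twistedAmpliation e (U k)).prod _ b) = _
  rw [prod_map_twistedAmpliation_single_add_single_fixed ha hab]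
  rcases eq_or_ne w [] with rfl | hw
  · simp [lp.single_apply, hab.symm, hPJ, ← add_smul]
  · rw [prod_map_twistedAmpliation_single_add_single_wandering ha hab hb U hw, hA w hw]
    simp

end RhoCompression

theorem not_mem_periodicPts_optionCongr_addRight_one (n : ℤ) :
    some n ∉ Function.periodicPts (Equiv.optionCongr (Equiv.addRight (1 : ℤ))) := by
  have hiter (m : ℕ) :
      (Equiv.optionCongr (Equiv.addRight (1 : ℤ)))^[m] (some n) = some (n + m) := by
    induction m with
    | zero => simp
    | succ m ih => simp [Function.iterate_succ_apply', ih, add_assoc]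
  rintro ⟨m, hm, hper⟩
  have : n + m = n := Option.some_injective _ ((hiter m).symm.trans hper)
  lia

section UniformDilation

theorem isUnitaryOp_sum_smul_twistedAmpliation {κ I Y : Type*} [Fintype κ]
    [NormedAddCommGroup Y] [InnerProductSpace ℂ Y] [CompleteSpace Y] (e : Equiv.Perm I)
    {ζ : κ → ℂ} {U : κ → Y →L[ℂ] Y} (hU : IsUnitaryOp (∑ k, ζ k • U k)) :
    IsUnitaryOp (∑ k, ζ k • twistedAmpliation e (U k)) := by
  rw [sum_smul_twistedAmpliation, isUnitaryOp_iff_mem_unitary]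
  exact twistedAmpliation_mem_unitary e (isUnitaryOp_iff_mem_unitary.1 hU)

variable {N : ℕ} {H : Type} [NormedAddCommGroup H] [InnerProductSpace ℂ H]
  [CompleteSpace H] {V : Fin N → H →L[ℂ] H}

theorem memCu_one_of_compression
    (hV : ∀ ζ : Fin N → ℂ, (∀ k, ‖ζ k‖ = 1) → IsUnitaryOp (∑ k, ζ k • V k))
    (K : Submodule ℂ H) [CompleteSpace K] {T : Fin N → K →L[ℂ] K}
    (hT : ∀ w : List (Fin N), w ≠ [] →
      (w.map T).prod = K.orthogonalProjectionOnto ∘L (w.map V).prod ∘L K.subtypeL) :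
    MemCu N 1 T :=
  ⟨⟨H, K.subtypeL, isometry_subtype_coe, V, hV, fun w hw => by
    rw [Complex.ofReal_one, one_smul, K.adjoint_subtypeL, hT w hw]⟩⟩

theorem nonempty_similarToCu1Witness_of_intertwining {X : Type*} [NormedAddCommGroup X]
    [InnerProductSpace ℂ X] [CompleteSpace X] {A : Fin N → X →L[ℂ] X}
    (hV : ∀ ζ : Fin N → ℂ, (∀ k, ‖ζ k‖ = 1) → IsUnitaryOp (∑ k, ζ k • V k))
    {Φ : H →L[ℂ] X} {J : X → H}
    (hJ : ∀ (w : List (Fin N)) x, Φ ((w.map V).prod (J x)) = (w.map A).prod x) :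
    Nonempty (SimilarToCu1Witness N X A) := by
  have hΦ := surjOn_intertwiningSubmodule hJ
  let E := kerComplementEquiv hΦ
  let T k := E.symm.conjContinuousAlgEquiv (A k)
  have hT (w : List (Fin N)) :
      (w.map T).prod = E.symm.conjContinuousAlgEquiv (w.map A).prod := by
    rw [map_list_prod, List.map_map]
    rfl
  have hmem : MemCu N 1 T := memCu_one_of_compression hV _ fun w _ =>
    (hT w).trans (compression_kerComplement_eq_conj hΦ (mapsTo_prod_intertwiningSubmodule w)
      fun _ hy => mem_intertwiningSubmodule.1 hy w).symm
  exact ⟨⟨_, T, hmem, E.symm, fun k => by ext x; simp [T]⟩⟩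

end UniformDilation

theorem memCu_similar_to_Cu1_general {N : ℕ} {ρ : ℝ} {X : Type*} [NormedAddCommGroup X]
    [InnerProductSpace ℂ X] [CompleteSpace X] {A : Fin N → X →L[ℂ] X} (hA : MemCu N ρ A) :
    Nonempty (SimilarToCu1Witness N X A) := by
  obtain ⟨Y, ι, isom, U, hU, dil⟩ := hA
  have hι (x : X) : adjoint ι (ι x) = x :=
    congr($(ι.isometry_iff_adjoint_comp_self.1 isom) x)
  let e : Equiv.Perm (Option ℤ) := Equiv.optionCongr (Equiv.addRight 1)
  have hfixed : Function.IsFixedPt e none := rfl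
  have hwandering : some 0 ∉ Function.periodicPts e :=
    not_mem_periodicPts_optionCongr_addRight_one 0
  exact nonempty_similarToCu1Witness_of_intertwining
    (fun ζ hζ => isUnitaryOp_sum_smul_twistedAmpliation e (hU ζ hζ))
    (rho_compression_eq_prod hfixed hwandering hι fun w hw x => by rw [dil w hw]; rfl)

/-- every `A ∈ C^u_{ρ,N}` is simultaneously similar to some `T ∈ C^u_{1,N}`. -/
theorem memCu_similar_to_Cu1 (N : ℕ) (hN : 1 ≤ N) (ρ : ℝ) (hρ : 0 < ρ)
    {X : Type*} [NormedAddCommGroup X] [InnerProductSpace ℂ X] [CompleteSpace X]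
    (A : Fin N → X →L[ℂ] X) (hA : MemCu N ρ A) :
    Nonempty (SimilarToCu1Witness N X A) := by
  exact memCu_similar_to_Cu1_general hA
end
end

section
/- For every N > 1 and every ρ > 0 there exist a complex Hilbert space X and an N-tuple A = (A₁,…,A_N) of bounded linear operators on X such that A admits a uniform isometric ρ-dilation in the sense of Popescu (A ∈ C^P_{ρ,N}), but A does not admit a unitary ρ-dilation (A ∉ C_{ρ,N}); in particular A does not admit a uniform unitary ρ-dilation, so C^u_{ρ,N} ⊊ C^P_{ρ,N}. -/
open ContinuousLinearMap

noncomputable section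

/-- A uniform isometric `ρ`-dilation in the sense of Popescu: a complex Hilbert space `Y`,
a linear isometry `ι : X → Y`, and operators `V₁,…,V_N` on `Y` with `V_k* V_k = I`,
`V_k* V_j = 0` for `k ≠ j`, and `A_{i₁}⋯A_{iₙ} = ρ · ι* ∘ (V_{i₁}⋯V_{iₙ}) ∘ ι` for every
nonempty word `i₁,…,iₙ`. -/
structure PopescuRhoDilation (N : ℕ) (ρ : ℝ) (X : Type*) [NormedAddCommGroup X]
    [InnerProductSpace ℂ X] [CompleteSpace X] (A : Fin N → X →L[ℂ] X) where
  Y : Type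
  [instN : NormedAddCommGroup Y]
  [instI : InnerProductSpace ℂ Y]
  [instC : CompleteSpace Y]
  ι : X →L[ℂ] Y
  isom : Isometry ι
  V : Fin N → Y →L[ℂ] Y
  isometric : ∀ k, adjoint (V k) ∘L V k = 1
  orth : ∀ k j, k ≠ j → adjoint (V k) ∘L V j = 0
  dil : ∀ w : List (Fin N), w ≠ [] →
    (w.map A).prod = (ρ : ℂ) • (adjoint ι ∘L ((w.map V).prod ∘L ι))

/-- The Popescu class `C^P_{ρ,N}`: `N`-tuples admitting a uniform isometric `ρ`-dilation. -/
def MemCP (N : ℕ) (ρ : ℝ) {X : Type*} [NormedAddCommGroup X] [InnerProductSpace ℂ X]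
    [CompleteSpace X] (A : Fin N → X →L[ℂ] X) : Prop :=
  Nonempty (PopescuRhoDilation N ρ X A)

/-- A witness for STATEMENT 13: a complex Hilbert space `X` and an `N`-tuple `A` on `X` with
`A ∈ C^P_{ρ,N}` but `A ∉ C_{ρ,N}` (hence also `A ∉ C^u_{ρ,N}`). -/
structure PopescuNotUnitaryWitness (N : ℕ) (ρ : ℝ) where
  X : Type
  [instN : NormedAddCommGroup X]
  [instI : InnerProductSpace ℂ X]
  [instC : CompleteSpace X]
  A : Fin N → X →L[ℂ] X
  memP : MemCP N ρ A
  not_memC : ¬ MemC N ρ A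
  not_memCu : ¬ MemCu N ρ A

/-!
If `A` has a unitary `ρ`-dilation, then `∑ₖ Aₖ` is `ρ` times the compression of a unitary, so
`‖∑ₖ Aₖ‖ ≤ ρ`. Popescu's class obeys no such bound: the creation operators on the full Fock space
are isometries with pairwise orthogonal ranges, and compressing `ρ` times these operators to the
span of the words of length at most one gives operators `Aₖ` that send the vacuum to `ρ eₖ` and
kill every `eⱼ`. Every product of two of them vanishes, and so does the compression of every
product of two or more creation operators, hence the creation operators form a Popescu dilation;
but `∑ₖ Aₖ` sends the vacuum to a vector of norm `ρ √N`.
-/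

section HilbertBasis

variable {α 𝕜 E F : Type*} [RCLike 𝕜]
  [NormedAddCommGroup E] [InnerProductSpace 𝕜 E] [NormedAddCommGroup F] [InnerProductSpace 𝕜 F]

theorem continuousLinearMap_ext_hilbertBasis {G : Type*} [NormedAddCommGroup G] [NormedSpace 𝕜 G]
    (b : HilbertBasis α 𝕜 E) {S T : E →L[𝕜] G} (h : ∀ a, S (b a) = T (b a)) : S = T :=
  ext_on (Submodule.dense_iff_topologicalClosure_eq_top.2 b.dense_span) (Set.forall_mem_range.2 h)

theorem norm_sum_sq_of_orthonormal {v : α → E} (hv : Orthonormal 𝕜 v) (s : Finset α) :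
    ‖∑ a ∈ s, v a‖ ^ 2 = s.card := by
  simpa using hv.orthogonalFamily.norm_sum (fun _ => 1) s

variable [CompleteSpace F]

/-- The isometry that maps a Hilbert basis `b` onto an orthonormal family `v`. -/
def orthonormalIsometry (b : HilbertBasis α 𝕜 E) {v : α → F} (hv : Orthonormal 𝕜 v) :
    E →ₗᵢ[𝕜] F :=
  hv.orthogonalFamily.linearIsometry.comp b.repr.toLinearIsometry

variable (b : HilbertBasis α 𝕜 E) {v : α → F} (hv : Orthonormal 𝕜 v)

theorem orthonormalIsometry_apply (a : α) : orthonormalIsometry b hv (b a) = v a := by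
  classical
  simp [orthonormalIsometry, b.repr_self, OrthogonalFamily.linearIsometry_apply_single]

theorem adjoint_orthonormalIsometry_apply_eq_zero [CompleteSpace E] {y : F}
    (hy : ∀ a, inner 𝕜 (v a) y = 0) :
    adjoint (orthonormalIsometry b hv).toContinuousLinearMap y = 0 := by
  refine b.repr.map_eq_zero_iff.1 (lp.ext (funext fun a => ?_))
  simp [b.repr_apply_apply, adjoint_inner_right, orthonormalIsometry_apply, hy]

end HilbertBasis

section FockSpace

variable {κ 𝕜 E F : Type*} [RCLike 𝕜]
  [NormedAddCommGroup E] [InnerProductSpace 𝕜 E]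
  [NormedAddCommGroup F] [InnerProductSpace 𝕜 F] [CompleteSpace F]

/-- The left creation operator `e_w ↦ e_{kw}` on a full Fock space, that is, a Hilbert space with
a basis indexed by words. -/
def creation (b : HilbertBasis (List κ) 𝕜 F) (k : κ) : F →L[𝕜] F :=
  (orthonormalIsometry b
    (b.orthonormal.comp (List.cons k) List.cons_injective)).toContinuousLinearMap

theorem creation_apply (b : HilbertBasis (List κ) 𝕜 F) (k : κ) (w : List κ) :
    creation b k (b w) = b (k :: w) :=
  orthonormalIsometry_apply b (b.orthonormal.comp _ List.cons_injective) w

theorem adjoint_creation_comp_self (b : HilbertBasis (List κ) 𝕜 F) (k : κ) :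
    adjoint (creation b k) ∘L creation b k = 1 :=
  LinearIsometry.adjoint_comp_self _

theorem adjoint_creation_comp_of_ne (b : HilbertBasis (List κ) 𝕜 F) {k j : κ} (hkj : k ≠ j) :
    adjoint (creation b k) ∘L creation b j = 0 := by
  refine continuousLinearMap_ext_hilbertBasis b fun w => ?_
  rw [ContinuousLinearMap.comp_apply, creation_apply]
  exact adjoint_orthonormalIsometry_apply_eq_zero _ _ fun u =>
    b.orthonormal.inner_eq_zero fun h => hkj (List.cons.inj h).1

theorem prod_map_creation_apply (b : HilbertBasis (List κ) 𝕜 F) (w u : List κ) :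
    (w.map (creation b)).prod (b u) = b (w ++ u) := by
  induction w with
  | nil => simp
  | cons k w ih => simp [ih, creation_apply]

/-- The inclusion into the full Fock space of its part of degree at most one; `Option.toList`
identifies the indices with the words of length at most one. -/
def lowDegreeInclusion (e : HilbertBasis (Option κ) 𝕜 E) (b : HilbertBasis (List κ) 𝕜 F) :
    E →ₗᵢ[𝕜] F :=
  orthonormalIsometry e
    (b.orthonormal.comp Option.toList fun o p => by cases o <;> cases p <;> simp)

theorem lowDegreeInclusion_apply (e : HilbertBasis (Option κ) 𝕜 E)
    (b : HilbertBasis (List κ) 𝕜 F) (o : Option κ) : lowDegreeInclusion e b (e o) = b o.toList :=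
  orthonormalIsometry_apply e _ o

variable [CompleteSpace E]

/-- The scaled creation operator `c • creation b k`, compressed to degree at most one. -/
def truncatedCreation (e : HilbertBasis (Option κ) 𝕜 E) (b : HilbertBasis (List κ) 𝕜 F) (c : 𝕜)
    (k : κ) : E →L[𝕜] E :=
  c • (adjoint (lowDegreeInclusion e b).toContinuousLinearMap ∘L
    (creation b k ∘L (lowDegreeInclusion e b).toContinuousLinearMap))

variable (e : HilbertBasis (Option κ) 𝕜 E) (b : HilbertBasis (List κ) 𝕜 F) (c : 𝕜)

theorem adjoint_lowDegreeInclusion_apply_toList (o : Option κ) :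
    adjoint (lowDegreeInclusion e b).toContinuousLinearMap (b o.toList) = e o := by
  rw [← lowDegreeInclusion_apply e b]
  exact DFunLike.congr_fun (lowDegreeInclusion e b).adjoint_comp_self (e o)

theorem adjoint_lowDegreeInclusion_apply_of_one_lt_length {w : List κ} (hw : 1 < w.length) :
    adjoint (lowDegreeInclusion e b).toContinuousLinearMap (b w) = 0 := by
  refine adjoint_orthonormalIsometry_apply_eq_zero _ _ fun o => b.orthonormal.inner_eq_zero ?_
  rintro rfl
  cases o <;> simp at hw

theorem truncatedCreation_apply_none (k : κ) :
    truncatedCreation e b c k (e none) = c • e (some k) := by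
  simp [truncatedCreation, lowDegreeInclusion_apply, creation_apply,
    ← adjoint_lowDegreeInclusion_apply_toList e b (some k)]

theorem truncatedCreation_apply_some (k j : κ) : truncatedCreation e b c k (e (some j)) = 0 := by
  simp [truncatedCreation, lowDegreeInclusion_apply, creation_apply,
    adjoint_lowDegreeInclusion_apply_of_one_lt_length]

theorem truncatedCreation_mul_truncatedCreation (k j : κ) :
    truncatedCreation e b c k * truncatedCreation e b c j = 0 := by
  refine continuousLinearMap_ext_hilbertBasis e fun o => ?_
  cases o <;> simp [truncatedCreation_apply_none, truncatedCreation_apply_some]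

theorem compression_prod_map_creation_eq_zero {w : List κ} (hw : 1 < w.length) :
    adjoint (lowDegreeInclusion e b).toContinuousLinearMap ∘L
      ((w.map (creation b)).prod ∘L (lowDegreeInclusion e b).toContinuousLinearMap) = 0 := by
  refine continuousLinearMap_ext_hilbertBasis e fun o => ?_
  have hlen : 1 < (w ++ o.toList).length := by rw [List.length_append]; omega
  simp [lowDegreeInclusion_apply, prod_map_creation_apply,
    adjoint_lowDegreeInclusion_apply_of_one_lt_length e b hlen]

theorem prod_map_truncatedCreation {w : List κ} (hw : w ≠ []) :
    (w.map (truncatedCreation e b c)).prod =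
      c • (adjoint (lowDegreeInclusion e b).toContinuousLinearMap ∘L
        ((w.map (creation b)).prod ∘L (lowDegreeInclusion e b).toContinuousLinearMap)) := by
  match w, hw with
  | [k], _ => simp [truncatedCreation]
  | k :: j :: w, _ =>
    rw [compression_prod_map_creation_eq_zero e b (by simp), smul_zero, List.map_cons,
      List.map_cons, List.prod_cons, List.prod_cons, ← mul_assoc,
      truncatedCreation_mul_truncatedCreation, zero_mul]

theorem sqrt_card_mul_norm_le_norm_sum_truncatedCreation [Fintype κ] :
    √(Fintype.card κ) * ‖c‖ ≤ ‖∑ k, truncatedCreation e b c k‖ := by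
  have hsum : ‖∑ k, e (some k)‖ = √(Fintype.card κ) := by
    rw [← Real.sqrt_sq (norm_nonneg _)]
    exact congrArg Real.sqrt
      (norm_sum_sq_of_orthonormal (e.orthonormal.comp some (Option.some_injective κ)) Finset.univ)
  calc √(Fintype.card κ) * ‖c‖
      = ‖(∑ k, truncatedCreation e b c k) (e none)‖ := by
        simp only [_root_.sum_apply, truncatedCreation_apply_none, ← Finset.smul_sum, norm_smul,
          hsum, mul_comm]
    _ ≤ ‖∑ k, truncatedCreation e b c k‖ := unit_le_opNorm _ _ (e.orthonormal.norm_eq_one _).le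

end FockSpace

theorem memCP_truncatedCreation {N : ℕ} {E : Type*} {F : Type}
    [NormedAddCommGroup E] [InnerProductSpace ℂ E] [CompleteSpace E]
    [NormedAddCommGroup F] [InnerProductSpace ℂ F] [CompleteSpace F]
    (e : HilbertBasis (Option (Fin N)) ℂ E) (b : HilbertBasis (List (Fin N)) ℂ F) (ρ : ℝ) :
    MemCP N ρ (truncatedCreation e b (ρ : ℂ)) :=
  ⟨{ Y := F
     ι := (lowDegreeInclusion e b).toContinuousLinearMap
     isom := (lowDegreeInclusion e b).isometry
     V := creation b
     isometric := adjoint_creation_comp_self b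
     orth := fun _ _ => adjoint_creation_comp_of_ne b
     dil := fun _ => prod_map_truncatedCreation e b ρ }⟩

section LinearPencil

variable {κ R B C : Type*} [Fintype κ] [CommSemiring R] [Semiring B] [Algebra R B]
  [Semiring C] [Algebra R C] {φ : B →ₗ[R] C} {x : κ → B} {y : κ → C}

theorem map_sum_smul_pow_mul_prod (h : ∀ w : List κ, w ≠ [] → φ (w.map x).prod = (w.map y).prod)
    (z : κ → R) (n : ℕ) {w : List κ} (hw : w ≠ []) :
    φ ((∑ k, z k • x k) ^ n * (w.map x).prod) = (∑ k, z k • y k) ^ n * (w.map y).prod := by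
  induction n generalizing w with
  | zero => simpa using h w hw
  | succ n ih =>
    have ih_cons (k : κ) := ih (List.cons_ne_nil k w)
    simp only [List.map_cons, List.prod_cons] at ih_cons
    simp only [pow_succ, mul_assoc, Finset.sum_mul, Finset.mul_sum, smul_mul_assoc,
      mul_smul_comm, map_sum, map_smul, ih_cons]

theorem map_sum_smul_pow (h : ∀ w : List κ, w ≠ [] → φ (w.map x).prod = (w.map y).prod)
    (z : κ → R) {n : ℕ} (hn : 1 ≤ n) :
    φ ((∑ k, z k • x k) ^ n) = (∑ k, z k • y k) ^ n := by
  obtain ⟨m, rfl⟩ := Nat.exists_eq_add_of_le' hn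
  have h_singleton (k : κ) := map_sum_smul_pow_mul_prod h z m (List.cons_ne_nil k [])
  simp only [List.map_cons, List.map_nil, List.prod_singleton] at h_singleton
  simp only [pow_succ, Finset.mul_sum, mul_smul_comm, map_sum, map_smul, h_singleton]

end LinearPencil

section UnitaryDilation

variable {N : ℕ} {ρ : ℝ} {X : Type*} [NormedAddCommGroup X] [InnerProductSpace ℂ X]
  [CompleteSpace X] {A : Fin N → X →L[ℂ] X}

theorem MemCu.memC (hA : MemCu N ρ A) : MemC N ρ A := by
  obtain ⟨@⟨Y, _, _, _, ι, hι, At, hunit, hdil⟩⟩ := hA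
  let φ : (Y →L[ℂ] Y) →L[ℂ] (X →L[ℂ] X) :=
    (ρ : ℂ) • (compL ℂ X Y X (adjoint ι) ∘L (compL ℂ X Y Y).flip ι)
  have hφ (w : List (Fin N)) (hw : w ≠ []) :
      φ.toLinearMap (w.map At).prod = (w.map A).prod := (hdil w hw).symm
  exact ⟨{ Y := Y, ι := ι, isom := hι, At := At, unit := hunit,
           dil := fun z n hn => (map_sum_smul_pow hφ z hn).symm }⟩

theorem IsUnitaryOp.norm_le_one_s13 {T : X →L[ℂ] X} (hT : IsUnitaryOp T) : ‖T‖ ≤ 1 :=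
  opNorm_le_bound _ zero_le_one fun x => by
    rw [(norm_map_iff_adjoint_comp_self T).2 hT.2 x, one_mul]

theorem MemC.norm_sum_smul_le (hA : MemC N ρ A) {ζ : Fin N → ℂ} (hζ : ∀ k, ‖ζ k‖ = 1) :
    ‖∑ k, ζ k • A k‖ ≤ |ρ| := by
  obtain ⟨@⟨Y, _, _, _, ι, hι, At, hunit, hdil⟩⟩ := hA
  have hι_norm : ‖ι‖ ≤ 1 := opNorm_le_bound _ zero_le_one fun x => by
    rw [(AddMonoidHomClass.isometry_iff_norm ι).1 hι x, one_mul]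
  have hdil_one : ∑ k, ζ k • A k = (ρ : ℂ) • (adjoint ι ∘L ((∑ k, ζ k • At k) ∘L ι)) := by
    simpa only [pow_one] using hdil ζ 1 le_rfl
  rw [hdil_one, norm_smul, Complex.norm_real, Real.norm_eq_abs]
  refine mul_le_of_le_one_right (abs_nonneg ρ) ?_
  calc ‖adjoint ι ∘L ((∑ k, ζ k • At k) ∘L ι)‖
      ≤ ‖adjoint ι‖ * (‖∑ k, ζ k • At k‖ * ‖ι‖) :=
        (opNorm_comp_le _ _).trans (by gcongr; exact opNorm_comp_le _ _)
    _ ≤ 1 * (1 * 1) := by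
        rw [LinearIsometryEquiv.norm_map]
        gcongr
        exact (hunit ζ hζ).norm_le_one_s13
    _ = 1 := by norm_num

end UnitaryDilation

open scoped lp in
theorem exists_memCP_not_memC_general (N : ℕ) (ρ : ℝ) :
    ∃ (X : Type) (_ : NormedAddCommGroup X) (_ : InnerProductSpace ℂ X) (_ : CompleteSpace X)
      (A : Fin N → X →L[ℂ] X), MemCP N ρ A ∧ ∀ σ : ℝ, |σ| < √N * |ρ| → ¬ MemC N σ A := by
  let e : HilbertBasis (Option (Fin N)) ℂ ℓ²(Option (Fin N), ℂ) := default
  let b : HilbertBasis (List (Fin N)) ℂ ℓ²(List (Fin N), ℂ) := default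
  refine ⟨_, _, _, inferInstance, truncatedCreation e b (ρ : ℂ), memCP_truncatedCreation e b ρ,
    fun σ hσ hA => hσ.not_ge ?_⟩
  calc √N * |ρ| ≤ ‖∑ k, truncatedCreation e b (ρ : ℂ) k‖ := by
        simpa using sqrt_card_mul_norm_le_norm_sum_truncatedCreation e b (ρ : ℂ)
    _ ≤ |σ| := by simpa using hA.norm_sum_smul_le (ζ := fun _ => 1) (by simp)

/-- for every `N > 1` and `ρ > 0` there exist a complex Hilbert space `X` and an
`N`-tuple `A` on `X` with `A ∈ C^P_{ρ,N}` but `A ∉ C_{ρ,N}`; in particular `A ∉ C^u_{ρ,N}`,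
so `C^u_{ρ,N} ⊊ C^P_{ρ,N}`. -/
theorem exists_memCP_not_memC (N : ℕ) (hN : 1 < N) (ρ : ℝ) (hρ : 0 < ρ) :
    Nonempty (PopescuNotUnitaryWitness N ρ) := by
  obtain ⟨X, _, _, _, A, hP, hC⟩ := exists_memCP_not_memC_general N ρ
  have hA : ¬ MemC N ρ A := hC ρ <| lt_mul_of_one_lt_left (abs_pos.2 hρ.ne') <|
    Real.lt_sqrt_of_sq_lt (by simpa using hN)
  exact ⟨{ X := X, A := A, memP := hP, not_memC := hA, not_memCu := fun h => hA h.memC }⟩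
end
end
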